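/- Assume 𝕋 is bounded from below (a ∈ ℝ) and ℓ is in the limit-point case at b. Let φ_α ∈ [0, π), and for each z ∈ ℂ let (θ_z, θ_z^[1]) and (φ_z, φ_z^[1]) be the solution pairs of (ℓ − z)u = 0 with θ_z(σ(a)) = cos φ_α, θ_z^[1](σ(a)) = −sin φ_α, φ_z(σ(a)) = sin φ_α, φ_z^[1](σ(a)) = cos φ_α. Then for each z ∈ ℂ \ ℝ there is a unique m(z) ∈ ℂ such that the Weyl solution ψ_z = θ_z + m(z)·φ_z lies in L² near b, and the function m : ℂ \ ℝ → ℂ so defined is a Herglotz–Nevanlinna function: it is analytic on ℂ \ ℝ, satisfies m(conj z) = conj(m(z)), and Im m(z) > 0 whenever Im z > 0. -/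

import Mathlib

open MeasureTheory Set Filter
open scoped ENNReal NNReal Classical

/-- Forward shift of a time scale. -/
noncomputable def tsSigma (T : Set ℝ) (t : ℝ) : ℝ :=
  if ({s | s ∈ T ∧ t < s}).Nonempty then sInf {s | s ∈ T ∧ t < s} else sSup T

/-- Backward shift of a time scale. -/
noncomputable def tsRho (T : Set ℝ) (t : ℝ) : ℝ :=
  if ({s | s ∈ T ∧ s < t}).Nonempty then sSup {s | s ∈ T ∧ s < t} else sInf T

/-- `𝕋_κ` : the time scale with the left endpoint removed if it is finite and right-scattered. -/
noncomputable def tsKappa (T : Set ℝ) : Set ℝ :=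
  if BddBelow T ∧ sInf T < tsSigma T (sInf T) then T \ {sInf T} else T

/-- Extension `p̄` of a function on `𝕋_κ` to all of `ℝ`. -/
noncomputable def extK (T : Set ℝ) (p : ℝ → ℂ) (t : ℝ) : ℂ :=
  if t ∈ tsKappa T then p t else p (tsSigma (tsKappa T) t)

/-- Coercion of a real-valued coefficient to a complex-valued one. -/
def cR (f : ℝ → ℝ) : ℝ → ℂ := fun t => (f t : ℂ)

/-- `(u, u^[1])` is an integrated pair with density `h` against the measure `μ = dσ_κ`. -/
def IsPair (T : Set ℝ) (μ : Measure ℝ) (p : ℝ → ℂ) (u u1 h : ℝ → ℂ) : Prop :=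
  ∀ c x : ℝ, c ≤ x →
    u x = u c + ∫ t in c..x, u1 t / extK T p t ∧
    u1 x = u1 c + ∫ t in Set.Ioc c x, h t ∂μ

/-- `(u, u^[1])` is a solution pair of `(ℓ - z) u = g`. -/
def IsSLSol (T : Set ℝ) (μ : Measure ℝ) (p r q : ℝ → ℂ) (z : ℂ) (g : ℝ → ℂ)
    (u u1 : ℝ → ℂ) : Prop :=
  IsPair T μ p u u1 (fun t => (q t - z * r t) * u t - r t * g t)

/-- Wronskian of two pairs. -/
def Wr (u u1 v v1 : ℝ → ℂ) (x : ℝ) : ℂ := u x * v1 x - u1 x * v x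

/-- The integrand `|u|² r` as an `ℝ≥0∞`-valued function. -/
noncomputable def sqWeight (r : ℝ → ℝ) (u : ℝ → ℂ) (t : ℝ) : ℝ≥0∞ :=
  ((‖u t‖₊ : ℝ≥0∞)) ^ 2 * ENNReal.ofReal (r t)

/-- `u` lies in `L²` near the left endpoint `a`. -/
def L2NearLeft (T : Set ℝ) (μ : Measure ℝ) (r : ℝ → ℝ) (u : ℝ → ℂ) : Prop :=
  ∀ c ∈ tsKappa T, ∫⁻ t in {t | (∃ s ∈ T, s < t) ∧ t ≤ c} ∩ tsKappa T, sqWeight r u t ∂μ < ∞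

/-- `u` lies in `L²` near the right endpoint `b`. -/
def L2NearRight (T : Set ℝ) (μ : Measure ℝ) (r : ℝ → ℝ) (u : ℝ → ℂ) : Prop :=
  ∀ c ∈ tsKappa T, ∫⁻ t in {t | c ≤ t ∧ ∃ s ∈ T, t < s} ∩ tsKappa T, sqWeight r u t ∂μ < ∞

/-- `ℓ` is in the limit-circle case at the left endpoint. -/
def LimitCircleLeft (T : Set ℝ) (μ : Measure ℝ) (p r q : ℝ → ℝ) : Prop :=
  ∀ z : ℂ, ∀ u u1 : ℝ → ℂ, IsSLSol T μ (cR p) (cR r) (cR q) z 0 u u1 → L2NearLeft T μ r u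

/-- `ℓ` is in the limit-point case at the left endpoint. -/
def LimitPointLeft (T : Set ℝ) (μ : Measure ℝ) (p r q : ℝ → ℝ) : Prop :=
  ∀ z : ℂ, ∃ u u1 : ℝ → ℂ, IsSLSol T μ (cR p) (cR r) (cR q) z 0 u u1 ∧ ¬ L2NearLeft T μ r u

/-- `ℓ` is in the limit-circle case at the right endpoint. -/
def LimitCircleRight (T : Set ℝ) (μ : Measure ℝ) (p r q : ℝ → ℝ) : Prop :=
  ∀ z : ℂ, ∀ u u1 : ℝ → ℂ, IsSLSol T μ (cR p) (cR r) (cR q) z 0 u u1 → L2NearRight T μ r u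

/-- `ℓ` is in the limit-point case at the right endpoint. -/
def LimitPointRight (T : Set ℝ) (μ : Measure ℝ) (p r q : ℝ → ℝ) : Prop :=
  ∀ z : ℂ, ∃ u u1 : ℝ → ℂ, IsSLSol T μ (cR p) (cR r) (cR q) z 0 u u1 ∧ ¬ L2NearRight T μ r u

/-- The action `ℓ u = (-h + q u)/r` of the differential expression on a pair with density `h`. -/
noncomputable def ellApply (r q : ℝ → ℝ) (h u : ℝ → ℂ) (t : ℝ) : ℂ :=
  (-h t + (q t : ℂ) * u t) / (r t : ℂ)

/-- Membership in `L²(𝕋_κ; r dσ_κ)`. -/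
def MemL2T (T : Set ℝ) (μ : Measure ℝ) (r : ℝ → ℝ) (u : ℝ → ℂ) : Prop :=
  ∫⁻ t in tsKappa T, sqWeight r u t ∂μ < ∞

/-- The pair `(u, u^[1])` with density `h` belongs to `D_ℓ²`. -/
def MemD2 (T : Set ℝ) (μ : Measure ℝ) (p r q : ℝ → ℝ) (u u1 h : ℝ → ℂ) : Prop :=
  LocallyIntegrable h μ ∧ IsPair T μ (cR p) u u1 h ∧ MemL2T T μ r u ∧
    MemL2T T μ r (ellApply r q h u)

/-- The filter `x ↓ a`, `x ∈ 𝕋`. -/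
noncomputable def leftLimFilter (T : Set ℝ) : Filter ℝ :=
  if BddBelow T then nhdsWithin (sInf T) T else Filter.atBot ⊓ Filter.principal T

/-- The filter `x ↑ b`, `x ∈ 𝕋`. -/
noncomputable def rightLimFilter (T : Set ℝ) : Filter ℝ :=
  if BddAbove T then nhdsWithin (sSup T) T else Filter.atTop ⊓ Filter.principal T

/-- The measure `r dσ_κ` on `𝕋_κ`, giving the Hilbert space `L²(𝕋_κ; r dσ_κ)`. -/
noncomputable def wM (T : Set ℝ) (μ : Measure ℝ) (r : ℝ → ℝ) : Measure ℝ :=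
  (μ.restrict (tsKappa T)).withDensity fun t => ENNReal.ofReal (r t)

/-!
A time scale with a finite left endpoint and no right endpoint reduces to a half-line problem
`du = w u^[1] dt`, `du^[1] = (q - z r) u dμ` on `[σ(a), ∞)`, where `w = 1 / p̄`, and integration by
parts gives the Lagrange identity
`W(u, v)(x) - W(u, v)(σ(a)) = (z - ζ) ∫ u v r dμ` over `(σ(a), x]`.
For non-real `z` it shows that the coefficients `m` with `‖θ + m φ‖² ≤ Im m / Im z` in
`L²((σ(a), x]; r dμ)` form a disk of radius `(2 |Im z| ‖φ‖²)⁻¹`. These disks are nested, and in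
the limit-point case they shrink to a point `m(z)`. Applied to the solutions `ψ_z` that vanish at
`x`, the identity becomes, as `x → ∞`,
`(z - conj ζ) ⟪ψ_ζ, ψ_z⟫ = m(z) - conj m(ζ)`.
This Gram kernel contains everything else: the difference quotients of `m` are inner products of
Weyl solutions, so `m` is holomorphic, and `Im m(z) = Im z ‖ψ_z‖²` is positive because no
nontrivial solution vanishes `r dμ`-almost everywhere.
-/

open scoped Topology ComplexConjugate InnerProductSpace

/-! ### Primitives -/

theorem continuous_of_eq_add_intervalIntegral {E : Type*} [NormedAddCommGroup E]
    [NormedSpace ℝ E] {f u : ℝ → E} (h : ∀ c x : ℝ, c ≤ x → u x = u c + ∫ t in c..x, f t) :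
    Continuous u := by
  have eq_add (c x : ℝ) : u x = u c + ∫ t in c..x, f t := by
    rcases le_total c x with hcx | hxc
    · exact h c x hcx
    · rw [h x c hxc, intervalIntegral.integral_symm c x, neg_add_cancel_right]
  have continuousWithinAt {s : Set ℝ} {x : ℝ} (hs : ∀ c ∈ s, c ≠ x → uIcc x c ∈ 𝓝[s] x) :
      ContinuousWithinAt u s x := by
    by_cases hint : ∃ c ∈ s, c ≠ x ∧ IntervalIntegrable f volume x c
    · obtain ⟨c, hcs, hcx, hfi⟩ := hint
      have hcont : ContinuousOn u (uIcc x c) :=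
        ((intervalIntegral.continuousOn_primitive_interval' hfi left_mem_uIcc).const_add
          (u x)).congr fun y _ => eq_add x y
      exact (hcont x left_mem_uIcc).mono_of_mem_nhdsWithin (hs c hcs hcx)
    · -- The integrals are all junk, so `u` is constant on `s`.
      push Not at hint
      refine (continuousWithinAt_const (b := u x)).congr (fun y hy => ?_) rfl
      rcases eq_or_ne y x with rfl | hyx
      · rfl
      · rw [eq_add x y, intervalIntegral.integral_undef (hint y hy hyx), add_zero]
  refine continuous_iff_continuousAt.2 fun x => continuousAt_iff_continuous_left_right.2
    ⟨continuousWithinAt fun c hc hcx => ?_, continuousWithinAt fun c hc hcx => ?_⟩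
  · rw [uIcc_of_ge hc]
    exact Icc_mem_nhdsLE (lt_of_le_of_ne hc hcx)
  · rw [uIcc_of_le hc]
    exact Icc_mem_nhdsGE (lt_of_le_of_ne hc hcx.symm)

section IntegrationByParts

variable {𝕜 : Type*} [RCLike 𝕜] {m₁ m₂ : Measure ℝ} [SFinite m₁] [SFinite m₂] {f k : ℝ → 𝕜}

theorem integral_Iic_mul_eq_integral_indicator (m : Measure ℝ) (f k : ℝ → 𝕜) (t : ℝ) :
    (∫ s in Iic t, f s ∂m) * k t =
      ∫ s, {z : ℝ × ℝ | z.1 ≤ z.2}.indicator (fun z => f z.1 * k z.2) (s, t) ∂m := by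
  rw [← integral_indicator measurableSet_Iic, ← integral_mul_const]
  congr 1 with s
  by_cases hst : s ≤ t <;> simp [indicator, hst]

theorem integrable_integral_Iic_mul (hf : Integrable f m₁) (hk : Integrable k m₂) :
    Integrable (fun t => (∫ s in Iic t, f s ∂m₁) * k t) m₂ := by
  simp_rw [integral_Iic_mul_eq_integral_indicator]
  exact ((hf.mul_prod hk).indicator
    (measurableSet_le measurable_fst measurable_snd)).integral_prod_right

theorem integral_integral_Iic_mul_add [NullSingletonClass m₁] (hf : Integrable f m₁)
    (hk : Integrable k m₂) :
    ∫ t, (∫ s in Iic t, f s ∂m₁) * k t ∂m₂ + ∫ s, (∫ t in Iic s, k t ∂m₂) * f s ∂m₁ =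
      (∫ s, f s ∂m₁) * ∫ t, k t ∂m₂ := by
  set A : Set (ℝ × ℝ) := {z | z.1 < z.2}
  set F : ℝ × ℝ → 𝕜 := fun z => f z.1 * k z.2
  have hA : MeasurableSet A := measurableSet_lt measurable_fst measurable_snd
  have hF : Integrable F (m₁.prod m₂) := hf.mul_prod hk
  have below (t : ℝ) : (∫ s in Iic t, f s ∂m₁) * k t = ∫ s, A.indicator F (s, t) ∂m₁ := by
    rw [integral_Iic_eq_integral_Iio, ← integral_indicator measurableSet_Iio, ← integral_mul_const]
    congr 1 with s
    by_cases hst : s < t <;> simp [A, F, indicator, hst]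
  have above (s : ℝ) : (∫ t in Iic s, k t ∂m₂) * f s = ∫ t, Aᶜ.indicator F (s, t) ∂m₂ := by
    rw [← integral_indicator measurableSet_Iic, ← integral_mul_const]
    congr 1 with t
    by_cases hst : t ≤ s <;> simp [A, F, indicator, hst, mul_comm, not_lt.2, not_le.1]
  simp_rw [below, above]
  rw [← integral_prod_symm _ (hF.indicator hA), ← integral_prod _ (hF.indicator hA.compl),
    integral_indicator hA, integral_indicator hA.compl, integral_add_compl hA hF,
    integral_prod_mul]

end IntegrationByParts

/-- `F` is a primitive of `f` with respect to `m` on `[a, ∞)`. The integrals are over `Ioc`, so an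
atom of `m` at `x` contributes to `F x`. -/
structure IsPrimitiveFrom {𝕜 : Type*} [RCLike 𝕜] (a : ℝ) (m : Measure ℝ) (f F : ℝ → 𝕜) :
    Prop where
  integrableOn (x : ℝ) : IntegrableOn f (Ioc a x) m
  eq_add {x : ℝ} (hx : a ≤ x) : F x = F a + ∫ t in Ioc a x, f t ∂m

namespace IsPrimitiveFrom

variable {𝕜 : Type*} [RCLike 𝕜] {a x : ℝ} {m m₁ m₂ : Measure ℝ} {f g k F G U V : ℝ → 𝕜}

protected theorem add (hF : IsPrimitiveFrom a m f F) (hG : IsPrimitiveFrom a m g G) :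
    IsPrimitiveFrom a m (f + g) (F + G) where
  integrableOn x := (hF.integrableOn x).add (hG.integrableOn x)
  eq_add {x} hx := by
    rw [integral_add' (hF.integrableOn x) (hG.integrableOn x), Pi.add_apply, Pi.add_apply,
      hF.eq_add hx, hG.eq_add hx]
    ring

theorem const_smul (hF : IsPrimitiveFrom a m f F) (c : 𝕜) :
    IsPrimitiveFrom a m (c • f) (c • F) where
  integrableOn x := (hF.integrableOn x).smul c
  eq_add {x} hx := by
    simp only [Pi.smul_apply, integral_smul, hF.eq_add hx, smul_add]

protected theorem star (hF : IsPrimitiveFrom a m f F) : IsPrimitiveFrom a m (star f) (star F) where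
  integrableOn x := (RCLike.conjLIE (K := 𝕜)).integrable_comp_iff.2 (hF.integrableOn x)
  eq_add {x} hx := by
    simp only [Pi.star_apply, hF.eq_add hx, RCLike.star_def, map_add, integral_conj]

theorem sub_eq_integral (hF : IsPrimitiveFrom a m f F) {c : ℝ} (hac : a ≤ c) (hcx : c ≤ x) :
    F x - F c = ∫ t in Ioc c x, f t ∂m := by
  rw [hF.eq_add hac, hF.eq_add (hac.trans hcx), ← Ioc_union_Ioc_eq_Ioc hac hcx,
    setIntegral_union (Ioc_disjoint_Ioc_of_le le_rfl) measurableSet_Ioc (hF.integrableOn c)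
      ((hF.integrableOn x).mono_set (Ioc_subset_Ioc_left hac))]
  ring

theorem eq_add_integral_Iic (hF : IsPrimitiveFrom a m f F) {t : ℝ} (ht : t ∈ Ioc a x) :
    F t = F a + ∫ s in Iic t, f s ∂(m.restrict (Ioc a x)) := by
  rw [hF.eq_add ht.1.le, Measure.restrict_restrict measurableSet_Iic, inter_comm,
    Ioc_inter_Iic, min_eq_right ht.2]

variable [SFinite m₁] [SFinite m₂]

theorem integrableOn_mul (hU : IsPrimitiveFrom a m₁ f U) (hk : IntegrableOn k (Ioc a x) m₂) :
    IntegrableOn (fun t => U t * k t) (Ioc a x) m₂ := by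
  refine IntegrableOn.congr_fun ((hk.const_mul (U a)).add
    (integrable_integral_Iic_mul (hU.integrableOn x) hk)) (fun t ht => ?_) measurableSet_Ioc
  simp only [Pi.add_apply, ← add_mul, ← hU.eq_add_integral_Iic ht]

theorem setIntegral_mul_eq (hU : IsPrimitiveFrom a m₁ f U) (hk : IntegrableOn k (Ioc a x) m₂) :
    ∫ t in Ioc a x, U t * k t ∂m₂ = U a * ∫ t in Ioc a x, k t ∂m₂ +
      ∫ t in Ioc a x, (∫ s in Iic t, f s ∂(m₁.restrict (Ioc a x))) * k t ∂m₂ := by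
  rw [← integral_const_mul, ← integral_add (hk.const_mul (U a))
    (integrable_integral_Iic_mul (hU.integrableOn x) hk)]
  refine setIntegral_congr_fun measurableSet_Ioc fun t ht => ?_
  simp only [← add_mul, ← hU.eq_add_integral_Iic ht]

theorem mul_sub_mul_eq_integral [NullSingletonClass m₁] (hU : IsPrimitiveFrom a m₁ f U)
    (hV : IsPrimitiveFrom a m₂ k V) (hx : a ≤ x) :
    U x * V x - U a * V a =
      ∫ t in Ioc a x, U t * k t ∂m₂ + ∫ t in Ioc a x, V t * f t ∂m₁ := by
  rw [hU.setIntegral_mul_eq (hV.integrableOn x), hV.setIntegral_mul_eq (hU.integrableOn x),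
    hU.eq_add hx, hV.eq_add hx]
  linear_combination -integral_integral_Iic_mul_add (hU.integrableOn x) (hV.integrableOn x)

end IsPrimitiveFrom

/-! ### The half-line problem -/

/-- The data of the Sturm–Liouville equation `du = w u^[1] dt`, `du^[1] = (q - z r) u dμ` on the
half-line `[a, ∞)`. On a time scale `a` is `σ(a)`, `μ` is `dσ_κ` and `w` is `1 / p̄`. -/
structure HalfLineProblem where
  a : ℝ
  μ : Measure ℝ
  isLocallyFiniteMeasure : IsLocallyFiniteMeasure μ
  w : ℝ → ℝ
  r : ℝ → ℝ
  q : ℝ → ℝ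
  integrableOn_w (x : ℝ) : IntegrableOn w (Ioc a x)
  locallyIntegrable_r : LocallyIntegrable r μ
  locallyIntegrable_q : LocallyIntegrable q μ
  r_nonneg : 0 ≤ᵐ[μ] r

namespace HalfLineProblem

attribute [instance] HalfLineProblem.isLocallyFiniteMeasure

/-- `(u, u₁)` is a solution pair of `(ℓ - z) u = 0` on `[a, ∞)`. -/
structure IsSol (S : HalfLineProblem) (z : ℂ) (u : C(ℝ, ℂ)) (u₁ : ℝ → ℂ) : Prop where
  isPrimitive : IsPrimitiveFrom S.a volume (fun t => u₁ t * S.w t) u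
  isPrimitive_quasi : IsPrimitiveFrom S.a S.μ (fun t => (S.q t - z * S.r t) * u t) u₁

variable {S : HalfLineProblem} {z ζ : ℂ} {u v : C(ℝ, ℂ)} {u₁ v₁ : ℝ → ℂ} {x y : ℝ}

theorem integrableOn_density (S : HalfLineProblem) (z : ℂ) {f : ℝ → ℂ} (hf : Continuous f)
    (x : ℝ) : IntegrableOn (fun t => (S.q t - z * S.r t) * f t) (Ioc S.a x) S.μ := by
  have hq : IntegrableOn (fun t => (S.q t : ℂ)) (Icc S.a x) S.μ :=
    (S.locallyIntegrable_q.integrableOn_isCompact isCompact_Icc).ofReal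
  have hr : IntegrableOn (fun t => (S.r t : ℂ)) (Icc S.a x) S.μ :=
    (S.locallyIntegrable_r.integrableOn_isCompact isCompact_Icc).ofReal
  exact ((hq.sub (hr.const_mul z)).mul_continuousOn hf.continuousOn isCompact_Icc).mono_set
    Ioc_subset_Icc_self

theorem isSol_of_forall_eq_add {u u₁ : ℝ → ℂ}
    (h : ∀ c x : ℝ, c ≤ x → u x = u c + ∫ t in c..x, u₁ t * S.w t ∧
      u₁ x = u₁ c + ∫ t in Ioc c x, (S.q t - z * S.r t) * u t ∂S.μ) :
    ∃ hu : Continuous u, S.IsSol z ⟨u, hu⟩ u₁ := by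
  have hu : Continuous u := continuous_of_eq_add_intervalIntegral fun c x hcx => (h c x hcx).1
  have hu₁ : IsPrimitiveFrom S.a S.μ (fun t => (S.q t - z * S.r t) * u t) u₁ :=
    ⟨S.integrableOn_density z hu, fun hx => (h _ _ hx).2⟩
  refine ⟨hu, ⟨fun x => hu₁.integrableOn_mul (S.integrableOn_w x).ofReal, fun {x} hx => ?_⟩, hu₁⟩
  rw [← intervalIntegral.integral_of_le hx]
  exact (h _ _ hx).1

protected theorem IsSol.add (hu : S.IsSol z u u₁) (hv : S.IsSol z v v₁) :
    S.IsSol z (u + v) (u₁ + v₁) where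
  isPrimitive := by
    convert! hu.isPrimitive.add hv.isPrimitive using 1
    ext t; simp only [Pi.add_apply]; ring
  isPrimitive_quasi := by
    convert hu.isPrimitive_quasi.add hv.isPrimitive_quasi using 1
    ext t; simp only [Pi.add_apply, ContinuousMap.add_apply]; ring

theorem IsSol.const_smul (hu : S.IsSol z u u₁) (c : ℂ) : S.IsSol z (c • u) (c • u₁) where
  isPrimitive := by
    convert! hu.isPrimitive.const_smul c using 1
    ext t; simp only [Pi.smul_apply, smul_eq_mul]; ring
  isPrimitive_quasi := by
    convert hu.isPrimitive_quasi.const_smul c using 1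
    ext t; simp only [Pi.smul_apply, ContinuousMap.smul_apply, smul_eq_mul]; ring

protected theorem IsSol.star (hu : S.IsSol z u u₁) : S.IsSol (conj z) (star u) (star u₁) where
  isPrimitive := by
    convert! hu.isPrimitive.star using 1
    ext t; simp
  isPrimitive_quasi := by
    convert hu.isPrimitive_quasi.star using 1
    ext t; simp

theorem IsSol.wr_sub_wr (hu : S.IsSol z u u₁) (hv : S.IsSol ζ v v₁) (hx : S.a ≤ x) :
    Wr u u₁ v v₁ x - Wr u u₁ v v₁ S.a =
      (z - ζ) * ∫ t in Ioc S.a x, u t * v t * S.r t ∂S.μ := by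
  have huv := hu.isPrimitive.mul_sub_mul_eq_integral hv.isPrimitive_quasi hx
  have hvu := hv.isPrimitive.mul_sub_mul_eq_integral hu.isPrimitive_quasi hx
  have hcancel : ∫ t in Ioc S.a x, v₁ t * (u₁ t * S.w t) =
      ∫ t in Ioc S.a x, u₁ t * (v₁ t * S.w t) := by
    simp only [mul_left_comm]
  have hdensity : ∫ t in Ioc S.a x, u t * ((S.q t - ζ * S.r t) * v t) ∂S.μ -
      ∫ t in Ioc S.a x, v t * ((S.q t - z * S.r t) * u t) ∂S.μ =
      (z - ζ) * ∫ t in Ioc S.a x, u t * v t * S.r t ∂S.μ := by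
    rw [← integral_sub (hu.isPrimitive.integrableOn_mul (hv.isPrimitive_quasi.integrableOn x))
      (hv.isPrimitive.integrableOn_mul (hu.isPrimitive_quasi.integrableOn x)),
      ← integral_const_mul]
    congr 1 with t
    ring
  simp only [Wr]
  linear_combination huv - hvu + hcancel + hdensity

/-- The measure `r dμ` on `(a, ∞)`, whose `L²` space is the Hilbert space of the problem. -/
noncomputable def weight (S : HalfLineProblem) : Measure ℝ :=
  (S.μ.restrict (Ioi S.a)).withDensity fun t => ENNReal.ofReal (S.r t)

theorem weight_restrict_Ioc (S : HalfLineProblem) (x : ℝ) :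
    S.weight.restrict (Ioc S.a x) =
      (S.μ.restrict (Ioc S.a x)).withDensity fun t => ENNReal.ofReal (S.r t) := by
  rw [weight, restrict_withDensity measurableSet_Ioc, Measure.restrict_restrict measurableSet_Ioc,
    inter_eq_left.2 Ioc_subset_Ioi_self]

theorem integrableOn_r (S : HalfLineProblem) (x : ℝ) : IntegrableOn S.r (Ioc S.a x) S.μ :=
  (S.locallyIntegrable_r.integrableOn_isCompact isCompact_Icc).mono_set Ioc_subset_Icc_self

instance (S : HalfLineProblem) (x : ℝ) : IsFiniteMeasure (S.weight.restrict (Ioc S.a x)) := by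
  rw [weight_restrict_Ioc]
  exact isFiniteMeasure_withDensity_ofReal (S.integrableOn_r x).2

theorem setIntegral_weight (S : HalfLineProblem) (f : ℝ → ℂ) (x : ℝ) :
    ∫ t in Ioc S.a x, f t ∂S.weight = ∫ t in Ioc S.a x, f t * S.r t ∂S.μ := by
  rw [weight_restrict_Ioc, integral_withDensity_eq_integral_toReal_smul₀
    (S.integrableOn_r x).aemeasurable.ennreal_ofReal (by simp)]
  refine integral_congr_ae ?_
  filter_upwards [ae_restrict_of_ae S.r_nonneg] with t ht
  rw [ENNReal.toReal_ofReal ht, Complex.real_smul, mul_comm]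

theorem memLp_indicator (S : HalfLineProblem) (x : ℝ) (u : C(ℝ, ℂ)) :
    MemLp ((Ioc S.a x).indicator u) 2 S.weight := by
  obtain ⟨C, hC⟩ := isCompact_Icc.exists_bound_of_continuousOn
    (u.continuous.continuousOn (s := Icc S.a x))
  refine (memLp_indicator_iff_restrict measurableSet_Ioc).2
    (MemLp.of_bound u.continuous.aestronglyMeasurable C ?_)
  exact (ae_restrict_mem measurableSet_Ioc).mono fun t ht => hC t (Ioc_subset_Icc_self ht)

/-- The truncation of a continuous function to `(a, x]`, as an element of `L²(r dμ)`. -/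
noncomputable def trunc (S : HalfLineProblem) (x : ℝ) : C(ℝ, ℂ) →ₗ[ℂ] Lp ℂ 2 S.weight where
  toFun u := (S.memLp_indicator x u).toLp
  map_add' u v := by
    rw [← MemLp.toLp_add]
    exact MemLp.toLp_congr _ _ (ae_of_all _ fun t => congrFun (indicator_add _ u v) t)
  map_smul' c u := by
    rw [RingHom.id_apply, ← MemLp.toLp_const_smul]
    exact MemLp.toLp_congr _ _ (ae_of_all _ fun t => congrFun (indicator_const_smul _ c u) t)

theorem coeFn_trunc (S : HalfLineProblem) (x : ℝ) (u : C(ℝ, ℂ)) :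
    S.trunc x u =ᵐ[S.weight] (Ioc S.a x).indicator u :=
  (S.memLp_indicator x u).coeFn_toLp

theorem inner_trunc (S : HalfLineProblem) (x : ℝ) (u v : C(ℝ, ℂ)) :
    ⟪S.trunc x v, S.trunc x u⟫_ℂ = ∫ t in Ioc S.a x, u t * conj (v t) * S.r t ∂S.μ := by
  rw [← S.setIntegral_weight (fun t => u t * conj (v t)), ← integral_indicator measurableSet_Ioc,
    L2.inner_def]
  refine integral_congr_ae ?_
  filter_upwards [S.coeFn_trunc x u, S.coeFn_trunc x v] with t hu hv
  by_cases ht : t ∈ Ioc S.a x <;> simp [hu, hv, indicator, ht]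

theorem norm_trunc_le_norm_trunc (S : HalfLineProblem) (u : C(ℝ, ℂ)) (hxy : x ≤ y) :
    ‖S.trunc x u‖ ≤ ‖S.trunc y u‖ := by
  refine Lp.norm_le_norm_of_ae_le ?_
  filter_upwards [S.coeFn_trunc x u, S.coeFn_trunc y u] with t hx hy
  rw [hx, hy]
  exact norm_indicator_le_of_subset (Ioc_subset_Ioc_right hxy) u t

theorem eventually_trunc_ne_zero (h : S.trunc x u ≠ 0) : ∀ᶠ y in atTop, S.trunc y u ≠ 0 := by
  filter_upwards [eventually_ge_atTop x] with y hxy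
  exact norm_pos_iff.1 ((norm_pos_iff.2 h).trans_le (S.norm_trunc_le_norm_trunc u hxy))

theorem ae_weight_mem_Ioi (S : HalfLineProblem) : ∀ᵐ t ∂S.weight, t ∈ Ioi S.a :=
  (withDensity_absolutelyContinuous _ _).ae_le (ae_restrict_mem measurableSet_Ioi)

theorem ae_eventually_indicator_eq (S : HalfLineProblem) (u : C(ℝ, ℂ)) :
    ∀ᵐ t ∂S.weight, ∀ᶠ x in atTop, (Ioc S.a x).indicator u t = u t := by
  filter_upwards [S.ae_weight_mem_Ioi] with t ht
  filter_upwards [eventually_ge_atTop t] with x hx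
  exact indicator_of_mem (s := Ioc S.a x) ⟨ht, hx⟩ u

theorem ae_eq_zero_of_trunc_eq_zero (h : ∀ x, S.trunc x u = 0) : u =ᵐ[S.weight] 0 := by
  have hzero (n : ℕ) : (Ioc S.a n).indicator u =ᵐ[S.weight] 0 :=
    (S.coeFn_trunc n u).symm.trans (h n ▸ Lp.coeFn_zero ℂ 2 S.weight)
  filter_upwards [S.ae_eventually_indicator_eq u, ae_all_iff.2 hzero] with t ht hzt
  obtain ⟨n, hn⟩ := (tendsto_natCast_atTop_atTop.eventually ht).exists
  exact hn.symm.trans (hzt n)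

theorem memLp_of_eventually_norm_trunc_le {C : ℝ} (h : ∀ᶠ x in atTop, ‖S.trunc x u‖ ≤ C) :
    MemLp u 2 S.weight := by
  refine ⟨u.continuous.aestronglyMeasurable, lt_of_le_of_lt (Lp.eLpNorm_le_of_ae_tendsto
    (C := ENNReal.ofReal C) (f := fun x => (Ioc S.a x).indicator u) (u := atTop)
    (h.mono fun x hx => ?_) (fun x => (S.memLp_indicator x u).1) ?_)
    ENNReal.ofReal_lt_top⟩
  · rw [← eLpNorm_congr_ae (S.coeFn_trunc x u), ← ENNReal.ofReal_toReal (Lp.eLpNorm_ne_top _)]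
    exact ENNReal.ofReal_le_ofReal hx
  · filter_upwards [S.ae_eventually_indicator_eq u] with t ht
    exact tendsto_nhds_of_eventually_eq ht

theorem tendsto_trunc (hu : MemLp u 2 S.weight) :
    Tendsto (fun x => S.trunc x u) atTop (𝓝 hu.toLp) := by
  refine (Lp.tendsto_Lp_iff_tendsto_eLpNorm'' (fun x => (Ioc S.a x).indicator u)
    (fun x => S.memLp_indicator x u) u hu).2 ?_
  have hlim : Tendsto (fun x => ∫⁻ t, ‖((Ioc S.a x).indicator u - u) t‖ₑ ^ (2 : ℝ) ∂S.weight)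
      atTop (𝓝 (∫⁻ _, 0 ∂S.weight)) := by
    refine tendsto_lintegral_filter_of_dominated_convergence (fun t => ‖u t‖ₑ ^ (2 : ℝ))
      (Eventually.of_forall fun x => ?_) (Eventually.of_forall fun x => ae_of_all _ fun t => ?_)
      ?_ ?_
    · exact ((u.continuous.measurable.indicator measurableSet_Ioc).sub
        u.continuous.measurable).enorm.pow_const _
    · by_cases ht : t ∈ Ioc S.a x <;> simp [ht]
    · exact (lintegral_rpow_enorm_lt_top_of_eLpNorm_lt_top two_ne_zero ENNReal.ofNat_ne_top
        hu.2).ne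
    · filter_upwards [S.ae_eventually_indicator_eq u] with t ht
      exact tendsto_nhds_of_eventually_eq (ht.mono fun x hx => by simp [hx])
  simp_rw [eLpNorm_eq_lintegral_rpow_enorm_toReal two_ne_zero ENNReal.ofNat_ne_top]
  simpa using hlim.ennrpow_const (1 / 2)

end HalfLineProblem

/-! ### Weyl disks -/

theorem neg_four_mul_im_mul_im_le (a b c d : ℂ) :
    -(4 * (b * conj a).im * (d * conj c).im) ≤ ‖a * d - b * c‖ ^ 2 := by
  have hid : ‖a * d - b * c‖ ^ 2 - ‖a * conj d - b * conj c‖ ^ 2 =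
      -(4 * (b * conj a).im * (d * conj c).im) := by
    simp only [← Complex.normSq_eq_norm_sq, Complex.normSq_apply, Complex.sub_re, Complex.sub_im,
      Complex.mul_re, Complex.mul_im, Complex.conj_re, Complex.conj_im]
    ring
  linarith [sq_nonneg ‖a * conj d - b * conj c‖]

/-- A disk on which the defect is nonnegative is small if the defect is small: compare the
defect at the midpoint of `m` and `m'` with the parallelogram law. -/
theorem sq_norm_sub_mul_sq_norm_le {E : Type*} [NormedAddCommGroup E] [InnerProductSpace ℂ E]
    {A B : E} {y C : ℝ} (hC : ∀ m : ℂ, (m.im / y - ‖A + m • B‖ ^ 2) * ‖B‖ ^ 2 ≤ C) {m m' : ℂ}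
    (hm : ‖A + m • B‖ ^ 2 ≤ m.im / y) (hm' : ‖A + m' • B‖ ^ 2 ≤ m'.im / y) :
    (‖m - m'‖ * ‖B‖ ^ 2) ^ 2 ≤ 4 * C := by
  have hmid : ‖A + m • B + (A + m' • B)‖ = 2 * ‖A + ((m + m') / 2) • B‖ := by
    rw [← Complex.norm_two, ← norm_smul]
    congr 1
    module
  have hdiff : ‖A + m • B - (A + m' • B)‖ = ‖m - m'‖ * ‖B‖ := by
    rw [← norm_smul]
    congr 1
    module
  have hpar := parallelogram_law_with_norm ℂ (A + m • B) (A + m' • B)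
  rw [hmid, hdiff] at hpar
  have him : ((m + m') / 2).im / y = (m.im / y + m'.im / y) / 2 := by
    rw [Complex.div_ofNat_im, Complex.add_im]; ring
  have hdefect : ‖m - m'‖ ^ 2 * ‖B‖ ^ 2 / 4 ≤
      ((m + m') / 2).im / y - ‖A + ((m + m') / 2) • B‖ ^ 2 := by
    rw [him]; nlinarith
  nlinarith [hC ((m + m') / 2), mul_le_mul_of_nonneg_right hdefect (sq_nonneg ‖B‖)]

namespace HalfLineProblem

variable {S : HalfLineProblem} {z ζ : ℂ} {u v : C(ℝ, ℂ)} {u₁ v₁ : ℝ → ℂ} {x y : ℝ}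

theorem IsSol.mul_inner_trunc (hu : S.IsSol z u u₁) (hv : S.IsSol ζ v v₁) (hx : S.a ≤ x) :
    (z - conj ζ) * ⟪S.trunc x v, S.trunc x u⟫_ℂ =
      Wr u u₁ (star v : C(ℝ, ℂ)) (star v₁) x - Wr u u₁ (star v : C(ℝ, ℂ)) (star v₁) S.a := by
  rw [inner_trunc]
  exact (hu.wr_sub_wr hv.star hx).symm

theorem IsSol.im_mul_sq_norm_trunc (hu : S.IsSol z u u₁) (hx : S.a ≤ x) :
    z.im * ‖S.trunc x u‖ ^ 2 = (u₁ S.a * conj (u S.a)).im - (u₁ x * conj (u x)).im := by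
  have h := congrArg Complex.im (hu.mul_inner_trunc hu hx)
  rw [inner_self_eq_norm_sq_to_K, Complex.sub_conj] at h
  simp [Wr, ← Complex.ofReal_pow] at h ⊢
  linarith

/-- The solution pairs `(θ, θ₁)` and `(φ, φ₁)` with the initial values at `a` belonging to the
boundary condition of angle `α`. -/
structure IsFundamentalSystem (S : HalfLineProblem) (α : ℝ) (z : ℂ) (θ : C(ℝ, ℂ)) (θ₁ : ℝ → ℂ)
    (φ : C(ℝ, ℂ)) (φ₁ : ℝ → ℂ) : Prop where
  isSol_left : S.IsSol z θ θ₁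
  isSol_right : S.IsSol z φ φ₁
  left_apply : θ S.a = Real.cos α
  left_quasi_apply : θ₁ S.a = -Real.sin α
  right_apply : φ S.a = Real.sin α
  right_quasi_apply : φ₁ S.a = Real.cos α

/-- The Weyl disk at `x`; by the Lagrange identity its boundary consists of the `m` for which
`θ + m φ` satisfies a real boundary condition at `x`. -/
def weylDisk (S : HalfLineProblem) (z : ℂ) (θ φ : C(ℝ, ℂ)) (x : ℝ) : Set ℂ :=
  {m | ‖S.trunc x (θ + m • φ)‖ ^ 2 ≤ m.im / z.im}

/-- The parameter `m` for which `θ + m φ` vanishes at `x`. -/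
noncomputable def weylPoint (θ φ : C(ℝ, ℂ)) (x : ℝ) : ℂ :=
  -θ x / φ x

theorem weylDisk_antitone (S : HalfLineProblem) (z : ℂ) (θ φ : C(ℝ, ℂ)) :
    Antitone (S.weylDisk z θ φ) := fun _ _ hxy _ hm =>
  (pow_le_pow_left₀ (norm_nonneg _) (S.norm_trunc_le_norm_trunc _ hxy) 2).trans hm

theorem isClosed_weylDisk (S : HalfLineProblem) (z : ℂ) (θ φ : C(ℝ, ℂ)) (x : ℝ) :
    IsClosed (S.weylDisk z θ φ x) := by
  simp only [weylDisk, map_add, map_smul]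
  exact isClosed_le (by fun_prop) (by fun_prop)

namespace IsFundamentalSystem

variable {α : ℝ} {θ φ θ' φ' : C(ℝ, ℂ)} {θ₁ φ₁ θ₁' φ₁' : ℝ → ℂ} {m m' : ℂ}

theorem isSol_add_smul (F : S.IsFundamentalSystem α z θ θ₁ φ φ₁) (m : ℂ) :
    S.IsSol z (θ + m • φ) (θ₁ + m • φ₁) :=
  F.isSol_left.add (F.isSol_right.const_smul m)

theorem wr_eq_one (F : S.IsFundamentalSystem α z θ θ₁ φ φ₁) (hx : S.a ≤ x) :
    Wr θ θ₁ φ φ₁ x = 1 := by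
  have h := F.isSol_left.wr_sub_wr F.isSol_right hx
  rw [sub_self, zero_mul, sub_eq_zero] at h
  rw [h, Wr, F.left_apply, F.left_quasi_apply, F.right_apply, F.right_quasi_apply]
  norm_cast
  linarith [Real.sin_sq_add_cos_sq α]

theorem wr_star_apply (F : S.IsFundamentalSystem α z θ θ₁ φ φ₁)
    (G : S.IsFundamentalSystem α ζ θ' θ₁' φ' φ₁') (m m' : ℂ) :
    Wr (θ + m • φ : C(ℝ, ℂ)) (θ₁ + m • φ₁) (star (θ' + m' • φ') : C(ℝ, ℂ))
        (star (θ₁' + m' • φ₁')) S.a =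
      conj m' - m := by
  have h : (Real.sin α : ℂ) ^ 2 + (Real.cos α : ℂ) ^ 2 = 1 := by
    exact_mod_cast Real.sin_sq_add_cos_sq α
  simp only [Wr, ContinuousMap.star_apply, ContinuousMap.add_apply, ContinuousMap.smul_apply,
    Pi.add_apply, Pi.smul_apply, smul_eq_mul, Pi.star_apply, star_add, star_mul',
    F.left_apply, F.left_quasi_apply,
    F.right_apply, F.right_quasi_apply, G.left_apply, G.left_quasi_apply,
    G.right_apply, G.right_quasi_apply, RCLike.star_def, Complex.conj_ofReal, map_neg]
  linear_combination (conj m' - m) * h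

theorem mul_inner_trunc (F : S.IsFundamentalSystem α z θ θ₁ φ φ₁)
    (G : S.IsFundamentalSystem α ζ θ' θ₁' φ' φ₁') (m m' : ℂ) (hx : S.a ≤ x) :
    (z - conj ζ) * ⟪S.trunc x (θ' + m' • φ'), S.trunc x (θ + m • φ)⟫_ℂ = m - conj m' +
      Wr (θ + m • φ : C(ℝ, ℂ)) (θ₁ + m • φ₁) (star (θ' + m' • φ') : C(ℝ, ℂ))
        (star (θ₁' + m' • φ₁')) x := by
  have h := (F.isSol_add_smul m).mul_inner_trunc (G.isSol_add_smul m') hx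
  rw [h]
  linear_combination -F.wr_star_apply G m m'

theorem im_mul_sq_norm_trunc (F : S.IsFundamentalSystem α z θ θ₁ φ φ₁) (m : ℂ) (hx : S.a ≤ x) :
    z.im * ‖S.trunc x (θ + m • φ)‖ ^ 2 =
      m.im - ((θ₁ + m • φ₁) x * conj ((θ + m • φ) x)).im := by
  have h : (Real.sin α) ^ 2 + (Real.cos α) ^ 2 = 1 := Real.sin_sq_add_cos_sq α
  rw [(F.isSol_add_smul m).im_mul_sq_norm_trunc hx]
  congr 1
  simp [F.left_apply, F.left_quasi_apply, F.right_apply, F.right_quasi_apply,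
    -Complex.ofReal_cos, -Complex.ofReal_sin]
  linear_combination m.im * h

theorem im_mul_sq_norm_trunc_right (F : S.IsFundamentalSystem α z θ θ₁ φ φ₁) (hx : S.a ≤ x) :
    z.im * ‖S.trunc x φ‖ ^ 2 = -(φ₁ x * conj (φ x)).im := by
  rw [F.isSol_right.im_mul_sq_norm_trunc hx, F.right_apply, F.right_quasi_apply,
    Complex.conj_ofReal, ← Complex.ofReal_mul, Complex.ofReal_im, zero_sub]

theorem defect_mul_sq_norm_trunc_le (F : S.IsFundamentalSystem α z θ θ₁ φ φ₁) (hz : z.im ≠ 0)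
    (hx : S.a ≤ x) (m : ℂ) :
    (m.im / z.im - ‖S.trunc x (θ + m • φ)‖ ^ 2) * ‖S.trunc x φ‖ ^ 2 ≤ 1 / (4 * z.im ^ 2) := by
  have hψ := F.im_mul_sq_norm_trunc m hx
  have hφ := F.im_mul_sq_norm_trunc_right hx
  have hWr : (θ + m • φ) x * φ₁ x - (θ₁ + m • φ₁) x * φ x = 1 := by
    rw [← F.wr_eq_one hx]
    simp only [Wr, ContinuousMap.add_apply, ContinuousMap.smul_apply, Pi.add_apply, Pi.smul_apply,
      smul_eq_mul]
    ring
  have hle := neg_four_mul_im_mul_im_le ((θ + m • φ) x) ((θ₁ + m • φ₁) x) (φ x) (φ₁ x)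
  rw [hWr, norm_one, one_pow] at hle
  rw [le_div_iff₀ (by positivity)]
  calc (m.im / z.im - ‖S.trunc x (θ + m • φ)‖ ^ 2) * ‖S.trunc x φ‖ ^ 2 * (4 * z.im ^ 2)
      = 4 * (m.im - z.im * ‖S.trunc x (θ + m • φ)‖ ^ 2) * (z.im * ‖S.trunc x φ‖ ^ 2) := by
        field_simp
    _ = -(4 * ((θ₁ + m • φ₁) x * conj ((θ + m • φ) x)).im * (φ₁ x * conj (φ x)).im) := by
        rw [hψ, hφ]; ring
    _ ≤ 1 := hle

theorem norm_sub_mul_sq_norm_trunc_le (F : S.IsFundamentalSystem α z θ θ₁ φ φ₁) (hz : z.im ≠ 0)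
    (hx : S.a ≤ x) (hm : m ∈ S.weylDisk z θ φ x) (hm' : m' ∈ S.weylDisk z θ φ x) :
    ‖m - m'‖ * ‖S.trunc x φ‖ ^ 2 ≤ 1 / |z.im| := by
  have hdefect (n : ℂ) := F.defect_mul_sq_norm_trunc_le hz hx n
  simp only [weylDisk, mem_ofPred_eq, map_add, map_smul] at hm hm' hdefect
  refine le_of_sq_le_sq ((sq_norm_sub_mul_sq_norm_le hdefect hm hm').trans_eq ?_) (by positivity)
  rw [div_pow, sq_abs]
  field_simp

theorem right_apply_ne_zero (F : S.IsFundamentalSystem α z θ θ₁ φ φ₁) (hz : z.im ≠ 0)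
    (hx : S.a ≤ x) (hφ : S.trunc x φ ≠ 0) : φ x ≠ 0 := by
  intro h
  have hnorm := F.im_mul_sq_norm_trunc_right hx
  simp [h, hz, hφ] at hnorm

theorem add_weylPoint_smul_apply (h : φ x ≠ 0) : (θ + weylPoint θ φ x • φ) x = 0 := by
  simp [weylPoint, h]

theorem weylPoint_mem_weylDisk (F : S.IsFundamentalSystem α z θ θ₁ φ φ₁) (hz : z.im ≠ 0)
    (hx : S.a ≤ x) (hφ : S.trunc x φ ≠ 0) : weylPoint θ φ x ∈ S.weylDisk z θ φ x := by
  have h := F.im_mul_sq_norm_trunc (weylPoint θ φ x) hx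
  rw [add_weylPoint_smul_apply (F.right_apply_ne_zero hz hx hφ), map_zero, mul_zero,
    Complex.zero_im, sub_zero] at h
  exact ((eq_div_iff hz).2 (by rw [mul_comm, h])).le

theorem memLp_of_isSol (F : S.IsFundamentalSystem α z θ θ₁ φ φ₁) (hθ : MemLp θ 2 S.weight)
    (hφ : MemLp φ 2 S.weight) (hu : S.IsSol z u u₁) : MemLp u 2 S.weight := by
  refine ((hθ.const_smul (Wr u u₁ φ φ₁ S.a)).add (hφ.const_smul (Wr θ θ₁ u u₁ S.a))).ae_eq ?_
  filter_upwards [S.ae_weight_mem_Ioi] with x hx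
  have hWu := hu.wr_sub_wr F.isSol_right (mem_Ioi.1 hx).le
  have hWθ := F.isSol_left.wr_sub_wr hu (mem_Ioi.1 hx).le
  have hW := F.wr_eq_one (mem_Ioi.1 hx).le
  simp only [Wr, sub_self, zero_mul, sub_eq_zero] at hWu hWθ hW
  simp only [Pi.add_apply, Pi.smul_apply, smul_eq_mul, Wr, ← hWu, ← hWθ]
  linear_combination u x * hW

theorem isBounded_weylDisk (F : S.IsFundamentalSystem α z θ θ₁ φ φ₁) (hz : z.im ≠ 0)
    (hx : S.a ≤ x) (hφ : S.trunc x φ ≠ 0) : Bornology.IsBounded (S.weylDisk z θ φ x) := by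
  refine Metric.isBounded_iff.2 ⟨1 / |z.im| / ‖S.trunc x φ‖ ^ 2, fun m hm m' hm' => ?_⟩
  rw [dist_eq_norm, le_div_iff₀ (pow_pos (norm_pos_iff.2 hφ) 2)]
  exact F.norm_sub_mul_sq_norm_trunc_le hz hx hm hm'

theorem norm_trunc_left_le {R C : ℝ} (hm : m ∈ S.weylDisk z θ φ x) (hR : ‖m‖ ≤ R)
    (hC : ‖S.trunc x φ‖ ≤ C) : ‖S.trunc x θ‖ ≤ √(R / |z.im|) + R * C := by
  have hR0 : 0 ≤ R := (norm_nonneg m).trans hR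
  have hψ : ‖S.trunc x (θ + m • φ)‖ ^ 2 ≤ R / |z.im| := calc
    _ ≤ m.im / z.im := hm
    _ ≤ |m.im| / |z.im| := (le_abs_self _).trans_eq (abs_div _ _)
    _ ≤ R / |z.im| := by gcongr; exact (Complex.abs_im_le_norm m).trans hR
  calc ‖S.trunc x θ‖ = ‖S.trunc x (θ + m • φ) - m • S.trunc x φ‖ := by
        rw [map_add, map_smul, add_sub_cancel_right]
    _ ≤ ‖S.trunc x (θ + m • φ)‖ + ‖m‖ * ‖S.trunc x φ‖ := by
        rw [← norm_smul]; exact norm_sub_le _ _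
    _ ≤ √(R / |z.im|) + R * C := by gcongr; exact Real.le_sqrt_of_sq_le hψ

theorem eventually_forall_weylPoint_mem_weylDisk (F : S.IsFundamentalSystem α z θ θ₁ φ φ₁)
    (hz : z.im ≠ 0) (hφ : ∀ᶠ x in atTop, S.trunc x φ ≠ 0) :
    ∀ᶠ y in atTop, ∀ x ≥ y, weylPoint θ φ x ∈ S.weylDisk z θ φ y := by
  obtain ⟨x₀, hx₀⟩ := eventually_atTop.1 hφ
  filter_upwards [eventually_ge_atTop x₀, eventually_ge_atTop S.a] with y hy hay x hyx
  exact S.weylDisk_antitone z θ φ hyx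
    (F.weylPoint_mem_weylDisk hz (hay.trans hyx) (hx₀ x (hy.trans hyx)))

theorem tendsto_norm_trunc_right_atTop (F : S.IsFundamentalSystem α z θ θ₁ φ φ₁)
    (hz : z.im ≠ 0) (hφ : ∀ᶠ x in atTop, S.trunc x φ ≠ 0)
    (hlp : ∃ u u₁, S.IsSol z u u₁ ∧ ¬ MemLp u 2 S.weight) :
    Tendsto (fun x => ‖S.trunc x φ‖) atTop atTop := by
  refine tendsto_atTop_atTop_of_monotone (fun x y => S.norm_trunc_le_norm_trunc φ) ?_
  by_contra! hC
  obtain ⟨C, hC⟩ := hC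
  obtain ⟨u, u₁, hu, hnot⟩ := hlp
  have hmem := F.eventually_forall_weylPoint_mem_weylDisk hz hφ
  obtain ⟨y, hy, hay, hφy⟩ := (hmem.and ((eventually_ge_atTop S.a).and hφ)).exists
  obtain ⟨R, hR⟩ := (F.isBounded_weylDisk hz hay hφy).exists_norm_le
  refine hnot (F.memLp_of_isSol
    (memLp_of_eventually_norm_trunc_le (C := √(R / |z.im|) + R * C) ?_)
    (memLp_of_eventually_norm_trunc_le (Eventually.of_forall fun x => (hC x).le)) hu)
  filter_upwards [hmem, eventually_ge_atTop y] with x hx hyx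
  exact norm_trunc_left_le (hx x le_rfl) (hR _ (hy x hyx)) (hC x).le

theorem tendsto_div_sq_norm_trunc_right {c : ℝ}
    (hφ : Tendsto (fun x => ‖S.trunc x φ‖) atTop atTop) :
    Tendsto (fun x => c / ‖S.trunc x φ‖ ^ 2) atTop (𝓝 0) :=
  tendsto_const_nhds.div_atTop ((tendsto_pow_atTop two_ne_zero).comp hφ)

theorem exists_tendsto_weylPoint (F : S.IsFundamentalSystem α z θ θ₁ φ φ₁) (hz : z.im ≠ 0)
    (hφ : Tendsto (fun x => ‖S.trunc x φ‖) atTop atTop) :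
    ∃ m, Tendsto (weylPoint θ φ) atTop (𝓝 m) ∧ ∀ᶠ x in atTop, m ∈ S.weylDisk z θ φ x := by
  have hφ0 : ∀ᶠ x in atTop, S.trunc x φ ≠ 0 :=
    (hφ.eventually_gt_atTop 0).mono fun x => norm_pos_iff.1
  have hmem := F.eventually_forall_weylPoint_mem_weylDisk hz hφ0
  have hcauchy : CauchySeq (weylPoint θ φ) := by
    refine Metric.cauchySeq_iff'.2 fun ε hε => ?_
    obtain ⟨y, hy, hay, hφy, hlt⟩ := (hmem.and ((eventually_ge_atTop S.a).and (hφ0.and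
      ((tendsto_div_sq_norm_trunc_right hφ (c := 1 / |z.im|)).eventually_lt_const hε)))).exists
    refine ⟨y, fun x hx => lt_of_le_of_lt ?_ hlt⟩
    rw [dist_eq_norm, le_div_iff₀ (pow_pos (norm_pos_iff.2 hφy) 2)]
    exact F.norm_sub_mul_sq_norm_trunc_le hz hay (hy x hx) (hy y le_rfl)
  obtain ⟨m, hm⟩ := cauchySeq_tendsto_of_complete hcauchy
  refine ⟨m, hm, hmem.mono fun y hy => ?_⟩
  exact (S.isClosed_weylDisk z θ φ y).mem_of_tendsto hm ((eventually_ge_atTop y).mono hy)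

theorem memLp_of_eventually_mem_weylDisk (hm : ∀ᶠ x in atTop, m ∈ S.weylDisk z θ φ x) :
    MemLp (θ + m • φ : C(ℝ, ℂ)) 2 S.weight :=
  memLp_of_eventually_norm_trunc_le (hm.mono fun _ hx => Real.le_sqrt_of_sq_le hx)

theorem tendsto_trunc_weylPoint (F : S.IsFundamentalSystem α z θ θ₁ φ φ₁) (hz : z.im ≠ 0)
    (hφ : Tendsto (fun x => ‖S.trunc x φ‖) atTop atTop)
    (hm : ∀ᶠ x in atTop, m ∈ S.weylDisk z θ φ x)
    (hψ : MemLp (θ + m • φ : C(ℝ, ℂ)) 2 S.weight) :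
    Tendsto (fun x => S.trunc x (θ + weylPoint θ φ x • φ)) atTop (𝓝 hψ.toLp) := by
  have hφ0 : ∀ᶠ x in atTop, S.trunc x φ ≠ 0 :=
    (hφ.eventually_gt_atTop 0).mono fun x => norm_pos_iff.1
  have hdiff : Tendsto (fun x => (weylPoint θ φ x - m) • S.trunc x φ) atTop (𝓝 0) := by
    refine squeeze_zero_norm' (a := fun x => 1 / |z.im| / ‖S.trunc x φ‖) ?_
      (tendsto_const_nhds.div_atTop hφ)
    filter_upwards [hm, hφ0, eventually_ge_atTop S.a] with x hmx hφx hax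
    rw [norm_smul, le_div_iff₀ (norm_pos_iff.2 hφx), mul_assoc, ← sq]
    exact F.norm_sub_mul_sq_norm_trunc_le hz hax (F.weylPoint_mem_weylDisk hz hax hφx) hmx
  refine ((tendsto_trunc hψ).add hdiff).congr' (Eventually.of_forall fun x => ?_) |>.trans ?_
  · rw [← map_smul, ← map_add]
    congr 1
    module
  · rw [add_zero]

theorem eq_of_memLp (hφ : Tendsto (fun x => ‖S.trunc x φ‖) atTop atTop)
    (hm : MemLp (θ + m • φ : C(ℝ, ℂ)) 2 S.weight)
    (hm' : MemLp (θ + m' • φ : C(ℝ, ℂ)) 2 S.weight) : m = m' := by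
  by_contra hne
  have hmem : MemLp φ 2 S.weight := by
    convert! (hm.sub hm').const_smul (m - m')⁻¹ using 1
    ext t
    simp [← sub_mul, sub_ne_zero.2 hne]
  exact not_tendsto_nhds_of_tendsto_atTop hφ _ (tendsto_trunc hmem).norm

end IsFundamentalSystem

end HalfLineProblem

/-! ### Herglotz–Nevanlinna functions -/

/-- Herglotz–Nevanlinna functions on `ℂ \ ℝ`, in the strict sense that the upper half-plane is
mapped into the open upper half-plane. -/
structure IsHerglotzNevanlinna (m : ℂ → ℂ) : Prop where
  analyticOnNhd : AnalyticOnNhd ℂ m {z : ℂ | z.im ≠ 0}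
  map_conj (z : ℂ) : z.im ≠ 0 → m (conj z) = conj (m z)
  im_pos (z : ℂ) : 0 < z.im → 0 < (m z).im

/-- The kernel `(m z - conj (m ζ)) / (z - conj ζ)` of `m` on `ℂ \ ℝ` is the Gram kernel of the
vectors `ψ z`, stated without division so that it also covers `ζ = conj z`. -/
def IsGramKernel {H : Type*} [NormedAddCommGroup H] [InnerProductSpace ℂ H] (m : ℂ → ℂ)
    (ψ : ℂ → H) : Prop :=
  ∀ z ζ : ℂ, z.im ≠ 0 → ζ.im ≠ 0 → (z - conj ζ) * ⟪ψ ζ, ψ z⟫_ℂ = m z - conj (m ζ)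

namespace IsGramKernel

variable {H : Type*} [NormedAddCommGroup H] [InnerProductSpace ℂ H] {m : ℂ → ℂ} {ψ : ℂ → H}
  {z v : ℂ}

theorem map_conj (h : IsGramKernel m ψ) (hz : z.im ≠ 0) : m (conj z) = conj (m z) := by
  have hgram := h (conj z) z (by simpa using hz) hz
  rwa [sub_self, zero_mul, eq_comm, sub_eq_zero] at hgram

theorem im_eq (h : IsGramKernel m ψ) (hz : z.im ≠ 0) : (m z).im = z.im * ‖ψ z‖ ^ 2 := by
  have hgram := congrArg Complex.im (h z z hz hz)
  rw [inner_self_eq_norm_sq_to_K, Complex.sub_conj, Complex.sub_conj] at hgram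
  simp [← Complex.ofReal_pow] at hgram
  linarith

theorem sub_eq (h : IsGramKernel m ψ) (hz : z.im ≠ 0) (hv : v.im ≠ 0) :
    m z - m v = (z - v) * ⟪ψ (conj v), ψ z⟫_ℂ := by
  have hgram := h z (conj v) hz (by simpa using hv)
  rw [Complex.conj_conj] at hgram
  rw [hgram, h.map_conj hv, Complex.conj_conj]

theorem eventually_im_ne_zero (hv : v.im ≠ 0) : ∀ᶠ z in 𝓝 v, z.im ≠ 0 :=
  Complex.continuous_im.continuousAt.eventually_ne hv

theorem isBoundedUnder_norm (h : IsGramKernel m ψ) (hv : v.im ≠ 0) :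
    IsBoundedUnder (· ≤ ·) (𝓝 v) fun z => ‖ψ z‖ := by
  have hy : 0 < |v.im| / 2 := half_pos (abs_pos.2 hv)
  refine ⟨‖m v‖ / (|v.im| / 2) + ‖ψ (conj v)‖ + 1, eventually_map.2 ?_⟩
  filter_upwards [eventually_im_ne_zero hv, Metric.ball_mem_nhds v hy,
    (continuous_abs.comp Complex.continuous_im).continuousAt.eventually_const_le
      (half_lt_self (abs_pos.2 hv))] with z hz hzv hle
  have hzv' : ‖z - v‖ ≤ |v.im| / 2 := (mem_ball_iff_norm.1 hzv).le
  have hsq : |v.im| / 2 * ‖ψ z‖ ^ 2 ≤ ‖m v‖ + |v.im| / 2 * (‖ψ (conj v)‖ * ‖ψ z‖) := calc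
    _ ≤ |z.im| * ‖ψ z‖ ^ 2 := by gcongr; exact hle
    _ = |(m z).im| := by rw [h.im_eq hz, abs_mul, abs_of_nonneg (sq_nonneg ‖ψ z‖)]
    _ ≤ ‖m z‖ := Complex.abs_im_le_norm _
    _ ≤ ‖m v‖ + ‖m z - m v‖ := norm_le_norm_add_norm_sub' _ _
    _ ≤ _ := by rw [h.sub_eq hz hv, norm_mul]; gcongr; exact norm_inner_le_norm _ _
  have hquad : ‖ψ z‖ ^ 2 ≤ ‖m v‖ / (|v.im| / 2) + ‖ψ (conj v)‖ * ‖ψ z‖ := by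
    rw [div_add' _ _ _ hy.ne', le_div_iff₀ hy]
    linarith
  nlinarith [norm_nonneg (ψ z), norm_nonneg (ψ (conj v)), div_nonneg (norm_nonneg (m v)) hy.le]

theorem continuousAt (h : IsGramKernel m ψ) (hv : v.im ≠ 0) : ContinuousAt m v := by
  have hsmall : Tendsto (fun z => (z - v) * ⟪ψ (conj v), ψ z⟫_ℂ) (𝓝 v) (𝓝 0) := by
    refine Tendsto.zero_mul_isBoundedUnder_le ?_ ?_
    · exact tendsto_sub_nhds_zero_iff.2 tendsto_id
    · obtain ⟨C, hC⟩ := h.isBoundedUnder_norm hv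
      refine ⟨‖ψ (conj v)‖ * C, eventually_map.2 ((eventually_map.1 hC).mono fun z hz => ?_)⟩
      exact (norm_inner_le_norm _ _).trans (by gcongr)
  refine tendsto_sub_nhds_zero_iff.1 (hsmall.congr' ?_)
  filter_upwards [eventually_im_ne_zero hv] with z hz
  exact (h.sub_eq hz hv).symm

theorem tendsto_sq_norm (h : IsGramKernel m ψ) (hv : v.im ≠ 0) :
    Tendsto (fun z => ‖ψ z‖ ^ 2) (𝓝 v) (𝓝 (‖ψ v‖ ^ 2)) := by
  have heq {z : ℂ} (hz : z.im ≠ 0) : (m z).im / z.im = ‖ψ z‖ ^ 2 := by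
    rw [h.im_eq hz, mul_div_cancel_left₀ _ hz]
  rw [← heq hv]
  refine Tendsto.congr' ((eventually_im_ne_zero hv).mono fun z hz => heq hz) ?_
  exact (Complex.continuous_im.continuousAt.tendsto.comp (h.continuousAt hv)).div
    Complex.continuous_im.continuousAt hv

theorem tendsto_inner_left (h : IsGramKernel m ψ) (hv : v.im ≠ 0) :
    Tendsto (fun z => ⟪ψ v, ψ z⟫_ℂ) (𝓝 v) (𝓝 ⟪ψ v, ψ v⟫_ℂ) := by
  have hv' : v - conj v ≠ 0 := by simp [Complex.sub_conj, hv]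
  rw [← mul_div_cancel_left₀ ⟪ψ v, ψ v⟫_ℂ hv', h v v hv hv]
  refine Tendsto.congr' ?_ (((h.continuousAt hv).sub_const (conj (m v))).div
    (continuousAt_id.sub_const (conj v)) hv')
  filter_upwards [eventually_im_ne_zero hv,
    (continuousAt_id.sub continuousAt_const).eventually_ne hv'] with z hz hzv
  exact (div_eq_iff hzv).2 ((h z v hz hv).symm.trans (mul_comm _ _))

theorem continuousAt_vector (h : IsGramKernel m ψ) (hv : v.im ≠ 0) : ContinuousAt ψ v := by
  have hexpand (z : ℂ) :
      ‖ψ v‖ ^ 2 - 2 * Complex.re ⟪ψ v, ψ z⟫_ℂ + ‖ψ z‖ ^ 2 = ‖ψ z - ψ v‖ ^ 2 := by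
    rw [norm_sub_rev, norm_sub_sq (𝕜 := ℂ), RCLike.re_to_complex]
  have hsq : Tendsto (fun z => ‖ψ z - ψ v‖ ^ 2) (𝓝 v) (𝓝 0) := by
    have hlim := (((Complex.continuous_re.tendsto _).comp (h.tendsto_inner_left hv)).const_mul
      2).const_sub (‖ψ v‖ ^ 2) |>.add (h.tendsto_sq_norm hv)
    simpa only [Function.comp_apply, hexpand, sub_self, norm_zero, zero_pow two_ne_zero] using hlim
  rw [ContinuousAt, tendsto_iff_norm_sub_tendsto_zero]
  simpa using hsq.sqrt

theorem hasDerivAt (h : IsGramKernel m ψ) (hv : v.im ≠ 0) :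
    HasDerivAt m ⟪ψ (conj v), ψ v⟫_ℂ v := by
  rw [hasDerivAt_iff_tendsto_slope]
  refine Tendsto.congr' ?_
    ((tendsto_const_nhds.inner (h.continuousAt_vector hv)).mono_left nhdsWithin_le_nhds)
  filter_upwards [self_mem_nhdsWithin, (eventually_im_ne_zero hv).filter_mono nhdsWithin_le_nhds]
    with z hzv hz
  rw [slope_def_field, h.sub_eq hz hv, mul_div_cancel_left₀ _ (sub_ne_zero.2 hzv)]

theorem isHerglotzNevanlinna (h : IsGramKernel m ψ) (hψ : ∀ z : ℂ, 0 < z.im → ψ z ≠ 0) :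
    IsHerglotzNevanlinna m where
  analyticOnNhd := DifferentiableOn.analyticOnNhd
    (fun _ hv => (h.hasDerivAt hv).differentiableAt.differentiableWithinAt)
    (isOpen_ne_fun Complex.continuous_im continuous_const)
  map_conj _ := h.map_conj
  im_pos z hz := by
    rw [h.im_eq hz.ne']
    exact mul_pos hz (pow_pos (norm_pos_iff.2 (hψ z hz)) 2)

end IsGramKernel

/-! ### The Weyl function on the half-line -/

namespace HalfLineProblem

variable {S : HalfLineProblem} {z ζ : ℂ}

/-- The limit-point case at `∞`. -/
def IsLimitPoint (S : HalfLineProblem) : Prop :=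
  ∀ z : ℂ, ∃ (u : C(ℝ, ℂ)) (u₁ : ℝ → ℂ), S.IsSol z u u₁ ∧ ¬ MemLp u 2 S.weight

/-- Atkinson's definiteness condition: no nontrivial solution vanishes in `L²(r dμ)`. -/
def IsDefinite (S : HalfLineProblem) : Prop :=
  ∀ (z : ℂ) (u : C(ℝ, ℂ)) (u₁ : ℝ → ℂ), S.IsSol z u u₁ → u =ᵐ[S.weight] 0 →
    u S.a = 0 ∧ u₁ S.a = 0

variable {α : ℝ} {θ φ θ' φ' : C(ℝ, ℂ)} {θ₁ φ₁ θ₁' φ₁' : ℝ → ℂ} {m m' : ℂ}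

namespace IsFundamentalSystem

theorem eventually_trunc_right_ne_zero (F : S.IsFundamentalSystem α z θ θ₁ φ φ₁)
    (hS : S.IsDefinite) : ∀ᶠ x in atTop, S.trunc x φ ≠ 0 := by
  by_contra hφ
  have hzero : ∀ x, S.trunc x φ = 0 := fun x => by_contra fun hx => hφ (eventually_trunc_ne_zero hx)
  obtain ⟨hφa, hφ₁a⟩ := hS z φ φ₁ F.isSol_right (ae_eq_zero_of_trunc_eq_zero hzero)
  simpa [Wr, hφa, hφ₁a] using F.wr_eq_one le_rfl

theorem not_ae_eq_zero (F : S.IsFundamentalSystem α z θ θ₁ φ φ₁) (hS : S.IsDefinite) (m : ℂ) :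
    ¬ (θ + m • φ : C(ℝ, ℂ)) =ᵐ[S.weight] 0 := by
  intro hψ
  obtain ⟨hψa, hψ₁a⟩ := hS z _ _ (F.isSol_add_smul m) hψ
  simp only [ContinuousMap.add_apply, ContinuousMap.smul_apply, Pi.add_apply, Pi.smul_apply,
    smul_eq_mul] at hψa hψ₁a
  have hWr := F.wr_eq_one le_rfl
  rw [Wr] at hWr
  exact one_ne_zero (by linear_combination -hWr + φ₁ S.a * hψa - φ S.a * hψ₁a)

theorem tendsto_norm_trunc_right (F : S.IsFundamentalSystem α z θ θ₁ φ φ₁) (hS : S.IsDefinite)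
    (hlp : S.IsLimitPoint) (hz : z.im ≠ 0) : Tendsto (fun x => ‖S.trunc x φ‖) atTop atTop :=
  F.tendsto_norm_trunc_right_atTop hz (F.eventually_trunc_right_ne_zero hS) (hlp z)

end IsFundamentalSystem

/-- `m` is the Weyl coefficient and `ψ` the Weyl solution in `L²(r dμ)`. The Weyl solution is the
limit of the solutions that vanish at `x`, as `x → ∞`. -/
structure IsWeylSolution (S : HalfLineProblem) (θ φ : C(ℝ, ℂ)) (m : ℂ) (ψ : Lp ℂ 2 S.weight) :
    Prop where
  coeFn_ae_eq : ψ =ᵐ[S.weight] (θ + m • φ : C(ℝ, ℂ))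
  tendsto_weylPoint : Tendsto (weylPoint θ φ) atTop (𝓝 m)
  tendsto_trunc : Tendsto (fun x => S.trunc x (θ + weylPoint θ φ x • φ)) atTop (𝓝 ψ)

theorem IsFundamentalSystem.exists_isWeylSolution (F : S.IsFundamentalSystem α z θ θ₁ φ φ₁)
    (hS : S.IsDefinite) (hlp : S.IsLimitPoint) (hz : z.im ≠ 0) :
    ∃ m ψ, S.IsWeylSolution θ φ m ψ := by
  have hφ := F.tendsto_norm_trunc_right hS hlp hz
  obtain ⟨m, hm, hdisk⟩ := F.exists_tendsto_weylPoint hz hφ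
  have hψ := memLp_of_eventually_mem_weylDisk hdisk
  exact ⟨m, hψ.toLp, hψ.coeFn_toLp, hm, F.tendsto_trunc_weylPoint hz hφ hdisk hψ⟩

namespace IsWeylSolution

variable {ψ ψ' : Lp ℂ 2 S.weight}

theorem memLp_iff (W : S.IsWeylSolution θ φ m ψ)
    (hφ : Tendsto (fun x => ‖S.trunc x φ‖) atTop atTop) :
    MemLp (θ + m' • φ : C(ℝ, ℂ)) 2 S.weight ↔ m' = m := by
  have hm : MemLp (θ + m • φ : C(ℝ, ℂ)) 2 S.weight := (Lp.memLp ψ).ae_eq W.coeFn_ae_eq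
  exact ⟨fun hm' => IsFundamentalSystem.eq_of_memLp hφ hm' hm, fun h => h ▸ hm⟩

/-- The boundary term at `x` vanishes for the solutions that vanish at `x`, so it is absent from
the Lagrange identity in the limit `x → ∞`. -/
theorem mul_inner (F : S.IsFundamentalSystem α z θ θ₁ φ φ₁)
    (G : S.IsFundamentalSystem α ζ θ' θ₁' φ' φ₁') (W : S.IsWeylSolution θ φ m ψ)
    (W' : S.IsWeylSolution θ' φ' m' ψ') (hS : S.IsDefinite) (hz : z.im ≠ 0) (hζ : ζ.im ≠ 0) :
    (z - conj ζ) * ⟪ψ', ψ⟫_ℂ = m - conj m' := by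
  refine tendsto_nhds_unique ((W'.tendsto_trunc.inner W.tendsto_trunc).const_mul (z - conj ζ))
    (Tendsto.congr' ?_ (W.tendsto_weylPoint.sub
      ((Complex.continuous_conj.tendsto m').comp W'.tendsto_weylPoint)))
  filter_upwards [F.eventually_trunc_right_ne_zero hS, G.eventually_trunc_right_ne_zero hS,
    eventually_ge_atTop S.a] with x hFx hGx hax
  have hψx := IsFundamentalSystem.add_weylPoint_smul_apply (θ := θ)
    (F.right_apply_ne_zero hz hax hFx)
  have hψ'x := IsFundamentalSystem.add_weylPoint_smul_apply (θ := θ')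
    (G.right_apply_ne_zero hζ hax hGx)
  rw [F.mul_inner_trunc G _ _ hax, Wr, ContinuousMap.star_apply, hψx, hψ'x, star_zero, zero_mul,
    mul_zero, sub_zero, add_zero, Function.comp_apply]

end IsWeylSolution

theorem exists_isHerglotzNevanlinna_forall_memLp_iff {θ φ : ℂ → C(ℝ, ℂ)} {θ₁ φ₁ : ℂ → ℝ → ℂ}
    (hS : S.IsDefinite) (hlp : S.IsLimitPoint)
    (F : ∀ z, S.IsFundamentalSystem α z (θ z) (θ₁ z) (φ z) (φ₁ z)) :
    ∃ m : ℂ → ℂ, IsHerglotzNevanlinna m ∧ ∀ z : ℂ, z.im ≠ 0 → ∀ m' : ℂ,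
      MemLp (θ z + m' • φ z : C(ℝ, ℂ)) 2 S.weight ↔ m' = m z := by
  have hex (z : ℂ) : ∃ m ψ, z.im ≠ 0 → S.IsWeylSolution (θ z) (φ z) m ψ := by
    by_cases hz : z.im = 0
    · exact ⟨0, 0, fun h => absurd hz h⟩
    · obtain ⟨m, ψ, W⟩ := (F z).exists_isWeylSolution hS hlp hz
      exact ⟨m, ψ, fun _ => W⟩
  choose m ψ W using hex
  have hgram : IsGramKernel m ψ := fun z ζ hz hζ =>
    IsWeylSolution.mul_inner (F z) (F ζ) (W z hz) (W ζ hζ) hS hz hζ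
  refine ⟨m, hgram.isHerglotzNevanlinna fun z hz hψ => (F z).not_ae_eq_zero hS (m z) ?_,
    fun z hz m' => (W z hz).memLp_iff ((F z).tendsto_norm_trunc_right hS hlp hz)⟩
  exact (W z hz.ne').coeFn_ae_eq.symm.trans (hψ ▸ Lp.coeFn_zero ℂ 2 S.weight)

end HalfLineProblem

/-! ### The next point of an unbounded time scale -/

section TimeScale

variable {K : Set ℝ} {s t x : ℝ}

theorem isGLB_tsSigma (hub : ¬ BddAbove K) (t : ℝ) : IsGLB (K ∩ Ioi t) (tsSigma K t) := by
  have hne : (K ∩ Ioi t).Nonempty := not_bddAbove_iff.1 hub t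
  have heq : tsSigma K t = sInf (K ∩ Ioi t) := if_pos hne
  rw [heq]
  exact isGLB_csInf hne ⟨t, fun s hs => hs.2.le⟩

theorem tsSigma_mem (hcl : IsClosed K) (hub : ¬ BddAbove K) (t : ℝ) : tsSigma K t ∈ K :=
  hcl.closure_subset_iff.2 inter_subset_left
    ((isGLB_tsSigma hub t).mem_closure (not_bddAbove_iff.1 hub t))

theorem le_tsSigma (hub : ¬ BddAbove K) (t : ℝ) : t ≤ tsSigma K t :=
  (isGLB_tsSigma hub t).2 fun _ hs => hs.2.le

theorem tsSigma_le (hub : ¬ BddAbove K) (hs : s ∈ K) (hts : t < s) : tsSigma K t ≤ s :=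
  (isGLB_tsSigma hub t).1 ⟨hs, hts⟩

/-- The least point of `K` that is at least `t`. Evaluating a function at `tsCeil (tsKappa T)` is
the extension `extK` from `𝕋_κ` to `ℝ`. -/
noncomputable def tsCeil (K : Set ℝ) (t : ℝ) : ℝ := if t ∈ K then t else tsSigma K t

theorem isLeast_tsCeil (hcl : IsClosed K) (hub : ¬ BddAbove K) (t : ℝ) :
    IsLeast (K ∩ Ici t) (tsCeil K t) := by
  by_cases ht : t ∈ K
  · rw [tsCeil, if_pos ht]
    exact ⟨⟨ht, self_mem_Ici⟩, fun s hs => hs.2⟩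
  · rw [tsCeil, if_neg ht]
    exact ⟨⟨tsSigma_mem hcl hub t, le_tsSigma hub t⟩, fun s hs =>
      tsSigma_le hub hs.1 (hs.2.lt_of_ne (ne_of_mem_of_not_mem hs.1 ht).symm)⟩

theorem tsCeil_mem (hcl : IsClosed K) (hub : ¬ BddAbove K) (t : ℝ) : tsCeil K t ∈ K :=
  (isLeast_tsCeil hcl hub t).1.1

theorem le_tsCeil (hcl : IsClosed K) (hub : ¬ BddAbove K) (t : ℝ) : t ≤ tsCeil K t :=
  (isLeast_tsCeil hcl hub t).1.2

theorem tsCeil_le (hcl : IsClosed K) (hub : ¬ BddAbove K) (hs : s ∈ K) (hts : t ≤ s) :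
    tsCeil K t ≤ s :=
  (isLeast_tsCeil hcl hub t).2 ⟨hs, hts⟩

theorem monotone_tsCeil (hcl : IsClosed K) (hub : ¬ BddAbove K) : Monotone (tsCeil K) :=
  fun _ t hst => tsCeil_le hcl hub (tsCeil_mem hcl hub t) (hst.trans (le_tsCeil hcl hub t))

theorem tsCeil_eq_of_mem_Ioc (hcl : IsClosed K) (hub : ¬ BddAbove K)
    (hs : IsGreatest (K ∩ Iic x) s) (ht : t ∈ Ioc s (tsCeil K x)) : tsCeil K t = tsCeil K x := by
  have hxt : x ≤ tsCeil K t := by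
    by_contra! hlt
    exact (ht.1.trans_le (le_tsCeil hcl hub t)).not_ge (hs.2 ⟨tsCeil_mem hcl hub t, hlt.le⟩)
  exact le_antisymm (tsCeil_le hcl hub (tsCeil_mem hcl hub x) ht.2)
    (tsCeil_le hcl hub (tsCeil_mem hcl hub t) hxt)

end TimeScale

/-! ### Definiteness -/

namespace IsPrimitiveFrom

variable {a c d x : ℝ} {f F : ℝ → ℂ}

theorem eq_zero_of_forall_eq (hF : IsPrimitiveFrom a volume f F) (hac : a ≤ c) {k : ℂ}
    (hf : ∀ t ∈ Ioc c d, f t = k) (hc : F c = 0) (hd : F d = 0) (hx : x ∈ Icc c d) : F x = 0 := by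
  have hlinear : ∀ y ∈ Icc c d, F y = (y - c : ℝ) * k := fun y hy => by
    rw [← sub_zero (F y), ← hc, hF.sub_eq_integral hac hy.1,
      setIntegral_congr_fun measurableSet_Ioc fun t ht => hf t ⟨ht.1, ht.2.trans hy.2⟩,
      setIntegral_const, Real.volume_real_Ioc_of_le hy.1, Complex.real_smul]
  rcases hx.1.eq_or_lt with rfl | hcx
  · exact hc
  · have hk : k = 0 := by
      have hcd : ((d - c : ℝ) : ℂ) ≠ 0 :=
        Complex.ofReal_ne_zero.2 (sub_pos.2 (hcx.trans_le hx.2)).ne'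
      exact (mul_eq_zero.1 ((hlinear d ⟨hx.1.trans hx.2, le_rfl⟩).symm.trans hd)).resolve_left hcd
    rw [hlinear x hx, hk, mul_zero]

theorem ae_eq_zero_of_eqOn_zero (hF : IsPrimitiveFrom a volume f F) (hac : a ≤ c)
    (h : EqOn F 0 (Ici c)) : ∀ᵐ t ∂volume.restrict (Ioi c), f t = 0 := by
  have hint : LocallyIntegrable ((Ioi c).indicator f) := by
    refine locallyIntegrable_iff.2 fun k hk => ?_
    obtain ⟨x, hx⟩ := hk.bddAbove
    refine IntegrableOn.mono_set ?_ (show k ⊆ Iic x from hx)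
    rw [IntegrableOn, integrable_indicator_iff measurableSet_Ioi, IntegrableOn,
      Measure.restrict_restrict measurableSet_Ioi, Ioi_inter_Iic]
    exact (hF.integrableOn x).mono_set (Ioc_subset_Ioc_left hac)
  have hzero : (fun x => ∫ t in c..x, (Ioi c).indicator f t) = 0 := by
    ext x
    rcases le_total c x with hcx | hxc
    · rw [intervalIntegral.integral_of_le hcx, setIntegral_indicator measurableSet_Ioi,
        inter_eq_left.2 Ioc_subset_Ioi_self, ← hF.sub_eq_integral hac hcx, h hcx, h self_mem_Ici]
      simp
    · rw [intervalIntegral.integral_of_ge hxc, setIntegral_indicator measurableSet_Ioi,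
        (Ioc_disjoint_Ioi_same).inter_eq]
      simp
  refine (ae_restrict_iff' measurableSet_Ioi).2 ?_
  filter_upwards [_root_.LocallyIntegrable.ae_hasDerivAt_integral hint] with t ht hct
  rw [← indicator_of_mem hct f]
  exact (hzero ▸ ht c).unique (hasDerivAt_const t 0)

end IsPrimitiveFrom

namespace HalfLineProblem

variable {S : HalfLineProblem} {z : ℂ} {u : C(ℝ, ℂ)} {u₁ : ℝ → ℂ} {t : ℝ} {K : Set ℝ}

theorem restrict_absolutelyContinuous_weight (hr : ∀ᵐ t ∂S.μ, 0 < S.r t) :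
    S.μ.restrict (Ioi S.a) ≪ S.weight :=
  withDensity_absolutelyContinuous'
    S.locallyIntegrable_r.aestronglyMeasurable.aemeasurable.ennreal_ofReal.restrict
    ((ae_restrict_of_ae hr).mono fun _ ht => (ENNReal.ofReal_pos.2 ht).ne')

theorem eq_zero_of_mem_support (hu : ∀ᵐ s ∂S.μ.restrict (Ioi S.a), u s = 0)
    (ht : t ∈ S.μ.support) (hat : S.a < t) : u t = 0 := by
  by_contra hut
  have hnhds : Ioi S.a ∩ {s | u s ≠ 0} ∈ 𝓝 t :=
    inter_mem (Ioi_mem_nhds hat) (u.continuous.continuousAt.eventually_ne hut)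
  refine (Measure.mem_support_iff_forall t |>.1 ht _ hnhds).ne' ?_
  rw [inter_comm, ← Measure.restrict_apply' measurableSet_Ioi]
  exact hu

theorem IsSol.quasi_eq_left (hu : S.IsSol z u u₁) (h : ∀ᵐ s ∂S.μ.restrict (Ioi S.a), u s = 0)
    (ht : S.a ≤ t) : u₁ t = u₁ S.a := by
  rw [hu.isPrimitive_quasi.eq_add ht, integral_eq_zero_of_ae, add_zero]
  filter_upwards [ae_restrict_of_ae_restrict_of_subset Ioc_subset_Ioi_self h] with s hs
  rw [hs, mul_zero, Pi.zero_apply]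

/-- Between consecutive points of `K` the solution is affine and vanishes at both ends. -/
theorem IsSol.eqOn_zero (hu : S.IsSol z u u₁) (h : ∀ᵐ s ∂S.μ.restrict (Ioi S.a), u s = 0)
    (hcl : IsClosed K) (hub : ¬ BddAbove K) (hK : K ⊆ S.μ.support)
    (hw : S.w.FactorsThrough (tsCeil K)) (ht : t ∈ K) (hat : S.a < t) : EqOn u 0 (Ici t) := by
  intro x hx
  have hs := (hcl.inter isClosed_Iic).isGreatest_csSup (s := K ∩ Iic x) ⟨t, ht, hx⟩
    (bddAbove_Iic.mono inter_subset_right)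
  set s := sSup (K ∩ Iic x)
  have has : S.a < s := hat.trans_le (hs.2 ⟨ht, hx⟩)
  refine hu.isPrimitive.eq_zero_of_forall_eq (d := tsCeil K x) (k := u₁ S.a * S.w x) has.le
    (fun y hy => ?_) (eq_zero_of_mem_support h (hK hs.1.1) has)
    (eq_zero_of_mem_support h (hK (tsCeil_mem hcl hub x))
      (has.trans_le (hs.1.2.trans (le_tsCeil hcl hub x)))) ⟨hs.1.2, le_tsCeil hcl hub x⟩
  rw [hu.quasi_eq_left h (has.trans hy.1).le, hw (tsCeil_eq_of_mem_Ioc hcl hub hs hy)]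

theorem IsSol.quasi_left_eq_zero (hu : S.IsSol z u u₁)
    (h : ∀ᵐ s ∂S.μ.restrict (Ioi S.a), u s = 0) (hw : ∀ᵐ s ∂volume.restrict (Ioi S.a), S.w s ≠ 0)
    (hat : S.a ≤ t) (ht : EqOn u 0 (Ici t)) : u₁ S.a = 0 := by
  have : (ae (volume.restrict (Ioi t))).NeBot := ae_restrict_neBot.2 (by simp)
  obtain ⟨s, ⟨hs, hws⟩, hts⟩ := ((hu.isPrimitive.ae_eq_zero_of_eqOn_zero hat ht).and
    (ae_restrict_of_ae_restrict_of_subset (Ioi_subset_Ioi hat) hw)).and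
    (ae_restrict_mem measurableSet_Ioi) |>.exists
  rw [hu.quasi_eq_left h (hat.trans hts.le)] at hs
  exact (mul_eq_zero.1 hs).resolve_right (Complex.ofReal_ne_zero.2 hws)

theorem isDefinite_of_subset_support (hcl : IsClosed K) (hub : ¬ BddAbove K)
    (hK : K ⊆ S.μ.support) (hr : ∀ᵐ t ∂S.μ, 0 < S.r t) (hw : S.w.FactorsThrough (tsCeil K))
    (hw0 : ∀ᵐ t ∂volume.restrict (Ioi S.a), S.w t ≠ 0) : S.IsDefinite := by
  intro z u u₁ hu hzero
  have h : ∀ᵐ s ∂S.μ.restrict (Ioi S.a), u s = 0 :=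
    (restrict_absolutelyContinuous_weight hr).ae_le hzero
  obtain ⟨t, ht, hat⟩ := not_bddAbove_iff.1 hub S.a
  have hut := hu.eqOn_zero h hcl hub hK hw ht hat
  have hu₁ := hu.quasi_left_eq_zero h hw0 hat.le hut
  refine ⟨?_, hu₁⟩
  have hsub := hu.isPrimitive.sub_eq_integral le_rfl hat.le
  rw [hut self_mem_Ici, setIntegral_congr_fun (g := 0) measurableSet_Ioc
    fun s hs => by simp [hu.quasi_eq_left h hs.1.le, hu₁]] at hsub
  simpa using hsub

end HalfLineProblem

/-! ### Reduction of the time scale to the half-line -/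

section Kappa

variable {T : Set ℝ} {c s t : ℝ}

theorem tsKappa_eq_inter_Ici (hbb : BddBelow T) (hub : ¬ BddAbove T) :
    tsKappa T = T ∩ Ici (tsSigma T (sInf T)) := by
  unfold tsKappa
  ext s
  split_ifs with h
  · refine and_congr_right fun hs => ⟨fun hne => tsSigma_le hub hs ?_, fun hle => ?_⟩
    · exact (csInf_le hbb hs).lt_of_ne (Ne.symm hne)
    · exact (h.2.trans_le hle).ne'
  · have hle : tsSigma T (sInf T) ≤ sInf T := not_lt.1 fun hlt => h ⟨hbb, hlt⟩
    exact ⟨fun hs => ⟨hs, hle.trans (csInf_le hbb hs)⟩, And.left⟩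

theorem isClosed_tsKappa (hcl : IsClosed T) (hbb : BddBelow T) (hub : ¬ BddAbove T) :
    IsClosed (tsKappa T) := by
  rw [tsKappa_eq_inter_Ici hbb hub]
  exact hcl.inter isClosed_Ici

theorem not_bddAbove_tsKappa (hbb : BddBelow T) (hub : ¬ BddAbove T) :
    ¬ BddAbove (tsKappa T) := by
  rw [tsKappa_eq_inter_Ici hbb hub]
  refine fun h => hub ((h.union (bddAbove_Iio (a := tsSigma T (sInf T)))).mono fun s hs => ?_)
  exact (le_or_gt (tsSigma T (sInf T)) s).imp (And.intro hs) id

theorem tsCeil_tsKappa_eq (hcl : IsClosed T) (hbb : BddBelow T) (hub : ¬ BddAbove T)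
    (ht : sInf T < t) : tsCeil (tsKappa T) t = tsCeil T t := by
  refine (isLeast_tsCeil (isClosed_tsKappa hcl hbb hub) (not_bddAbove_tsKappa hbb hub) t).unique ?_
  have hinter : tsKappa T ∩ Ici t = T ∩ Ici t := by
    rw [tsKappa_eq_inter_Ici hbb hub, inter_right_comm, inter_eq_left]
    exact fun s hs => tsSigma_le hub hs.1 (ht.trans_le hs.2)
  rw [hinter]
  exact isLeast_tsCeil hcl hub t

theorem extK_cR (T : Set ℝ) (p : ℝ → ℝ) (t : ℝ) :
    extK T (cR p) t = p (tsCeil (tsKappa T) t) := by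
  unfold extK cR tsCeil
  split_ifs <;> rfl

theorem le_tsRho (hs : s ∈ T) (hsc : s < c) : s ≤ tsRho T c := by
  rw [tsRho, if_pos ⟨s, hs, hsc⟩]
  exact le_csSup ⟨c, fun _ ht => ht.2.le⟩ ⟨hs, hsc⟩

theorem sInf_le_tsRho (hbb : BddBelow T) (c : ℝ) : sInf T ≤ tsRho T c := by
  by_cases h : ∃ s ∈ T, s < c
  · obtain ⟨s, hs, hsc⟩ := h
    exact (csInf_le hbb hs).trans (le_tsRho hs hsc)
  · exact (if_neg h : tsRho T c = sInf T).ge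

theorem exists_mem_Ioo_of_lt_tsRho (ht : sInf T ≤ t) (htc : t < tsRho T c) :
    ∃ s ∈ T, s ∈ Ioo t c := by
  unfold tsRho at htc
  split_ifs at htc with h
  · obtain ⟨s, hs, hts⟩ := exists_lt_of_lt_csSup h htc
    exact ⟨s, hs.1, hts, hs.2⟩
  · exact absurd htc ht.not_gt

theorem tsCeil_lt_of_lt_tsRho (hcl : IsClosed T) (hub : ¬ BddAbove T) (ht : sInf T ≤ t)
    (htc : t < tsRho T c) : tsCeil T t < c := by
  obtain ⟨s, hs, hts, hsc⟩ := exists_mem_Ioo_of_lt_tsRho ht htc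
  exact (tsCeil_le hcl hub hs hts.le).trans_lt hsc

theorem le_tsRho_of_tsCeil_lt (hcl : IsClosed T) (hub : ¬ BddAbove T) (h : tsCeil T t < c) :
    t ≤ tsRho T c :=
  (le_tsCeil hcl hub t).trans (le_tsRho (tsCeil_mem hcl hub t) h)

theorem volume_tsCeil_preimage_Ico (hcl : IsClosed T) (hbb : BddBelow T) (hub : ¬ BddAbove T)
    (c d : ℝ) : volume (tsCeil T ⁻¹' Ico c d ∩ Ioi (sInf T)) =
      ENNReal.ofReal (tsRho T d - tsRho T c) := by
  apply le_antisymm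
  · rw [← Real.volume_Icc]
    refine measure_mono fun t ⟨ht, hat⟩ => ⟨?_, le_tsRho_of_tsCeil_lt hcl hub ht.2⟩
    by_contra! htc
    exact (tsCeil_lt_of_lt_tsRho hcl hub (mem_Ioi.1 hat).le htc).not_ge ht.1
  · rw [← Real.volume_Ioo]
    refine measure_mono fun t ht => ?_
    have hat : sInf T < t := (sInf_le_tsRho hbb c).trans_lt ht.1
    refine ⟨⟨?_, tsCeil_lt_of_lt_tsRho hcl hub hat.le ht.2⟩, hat⟩
    by_contra! htc
    exact (le_tsRho_of_tsCeil_lt hcl hub htc).not_gt ht.1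

theorem map_tsCeil_restrict_Ioi (hcl : IsClosed T) (hbb : BddBelow T) (hub : ¬ BddAbove T)
    {ν : Measure ℝ}
    (hν : ∀ c d : ℝ, c ≤ d → ν (Ico c d) = ENNReal.ofReal (tsRho T d - tsRho T c)) :
    (volume.restrict (Ioi (sInf T))).map (tsCeil (tsKappa T)) = ν := by
  have hmeas : Measurable (tsCeil T) := (monotone_tsCeil hcl hub).measurable
  have hcongr : tsCeil (tsKappa T) =ᵐ[volume.restrict (Ioi (sInf T))] tsCeil T :=
    (ae_restrict_mem measurableSet_Ioi).mono fun t ht => tsCeil_tsKappa_eq hcl hbb hub ht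
  have hIco ⦃c d : ℝ⦄ (hcd : c < d) :
      (volume.restrict (Ioi (sInf T))).map (tsCeil T) (Ico c d) = ν (Ico c d) := by
    rw [Measure.map_apply hmeas measurableSet_Ico,
      Measure.restrict_apply (hmeas measurableSet_Ico), hν c d hcd.le,
      volume_tsCeil_preimage_Ico hcl hbb hub]
  rw [Measure.map_congr hcongr]
  refine Measure.ext_of_Ico' _ _ (fun c d hcd => ?_) hIco
  rw [hIco hcd, hν c d hcd.le]
  exact ENNReal.ofReal_ne_top

end Kappa

section Sigma

variable {K : Set ℝ} {μ : Measure ℝ}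

theorem isLocallyFiniteMeasure_of_measure_Ioc {F : ℝ → ℝ}
    (h : ∀ c d : ℝ, c ≤ d → μ (Ioc c d) = ENNReal.ofReal (F d - F c)) :
    IsLocallyFiniteMeasure μ where
  finiteAtNhds x := ⟨Ioc (x - 1) (x + 1), Ioc_mem_nhds (by simp) (by simp), by
    rw [h _ _ (by linarith)]
    exact ENNReal.ofReal_lt_top⟩

theorem subset_support_of_measure_Ioc (hub : ¬ BddAbove K)
    (hμ : ∀ c d : ℝ, c ≤ d → μ (Ioc c d) = ENNReal.ofReal (tsSigma K d - tsSigma K c)) :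
    K ⊆ μ.support := by
  intro t ht
  refine (nhds_basis_Ioo_pos t).mem_measureSupport.2 fun ε hε => ?_
  have hpos : 0 < μ (Ioc (t - ε) (t + ε / 2)) := by
    rw [hμ _ _ (by linarith), ENNReal.ofReal_pos]
    linarith [tsSigma_le hub ht (sub_lt_self t hε), le_tsSigma hub (t + ε / 2)]
  exact hpos.trans_le (measure_mono (Ioc_subset_Ioo_right (by linarith)))

theorem support_subset_of_measure_Ioc (hcl : IsClosed K) (hub : ¬ BddAbove K)
    (hμ : ∀ c d : ℝ, c ≤ d → μ (Ioc c d) = ENNReal.ofReal (tsSigma K d - tsSigma K c)) :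
    μ.support ⊆ K := by
  intro t ht
  by_contra htK
  obtain ⟨ε, hε, hK⟩ := (nhds_basis_Ioo_pos t).mem_iff.1 (hcl.isOpen_compl.mem_nhds htK)
  have heq : K ∩ Ioi (t - ε) = K ∩ Ioi (t + ε / 2) := by
    ext s
    refine and_congr_right fun hs => ⟨fun hlt => ?_, fun hlt => ?_⟩
    · by_contra! hle
      exact hK ⟨hlt, (not_lt.1 hle).trans_lt (by linarith)⟩ hs
    · exact (show t - ε < t + ε / 2 by linarith).trans hlt
  have hsigma : tsSigma K (t - ε) = tsSigma K (t + ε / 2) :=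
    (isGLB_tsSigma hub _).unique (heq ▸ isGLB_tsSigma hub _)
  refine ((Measure.mem_support_iff_forall t).1 ht (Ioc (t - ε) (t + ε / 2))
    (Ioc_mem_nhds (by linarith) (by linarith))).ne' ?_
  rw [hμ _ _ (by linarith), hsigma, sub_self, ENNReal.ofReal_zero]

end Sigma

section SquareIntegrability

variable {T : Set ℝ} {μ : Measure ℝ} {p r q : ℝ → ℝ} {u : ℝ → ℂ}

theorem setLIntegral_sqWeight_lt_top (hr : LocallyIntegrable r μ) (hu : Continuous u) (c d : ℝ) :
    ∫⁻ t in Icc c d, sqWeight r u t ∂μ < ∞ := by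
  have hint : IntegrableOn (fun t => ‖u t‖ ^ 2 * r t) (Icc c d) μ :=
    (hr.integrableOn_isCompact isCompact_Icc).continuousOn_mul
      (hu.norm.pow 2).continuousOn isCompact_Icc
  convert hint.lintegral_lt_top using 3 with t
  rw [sqWeight, ENNReal.ofReal_mul (by positivity), ENNReal.ofReal_pow (norm_nonneg _),
    ofReal_norm, enorm_eq_nnnorm]

theorem not_bddAbove_of_limitPointRight (hr : LocallyIntegrable r μ)
    (hlp : LimitPointRight T μ p r q) : ¬ BddAbove T := by
  intro hT
  obtain ⟨u, u₁, hu, hL2⟩ := hlp 0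
  have hcont : Continuous u := continuous_of_eq_add_intervalIntegral fun c x hcx => (hu c x hcx).1
  refine hL2 fun c _ => (lintegral_mono_set ?_).trans_lt
    (setLIntegral_sqWeight_lt_top hr hcont c (sSup T))
  rintro t ⟨⟨hct, s, hs, hts⟩, -⟩
  exact ⟨hct, hts.le.trans (le_csSup hT hs)⟩

theorem HalfLineProblem.memLp_weight_iff (S : HalfLineProblem) (hu : Continuous u) :
    MemLp u 2 S.weight ↔ ∫⁻ t in Ioi S.a, sqWeight S.r u t ∂S.μ < ∞ := by
  rw [MemLp, and_iff_right hu.aestronglyMeasurable,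
    eLpNorm_lt_top_iff_lintegral_rpow_enorm_lt_top two_ne_zero ENNReal.ofNat_ne_top, weight,
    lintegral_withDensity_eq_lintegral_mul₀
      S.locallyIntegrable_r.aestronglyMeasurable.aemeasurable.ennreal_ofReal.restrict
      (hu.enorm.measurable.pow_const _).aemeasurable]
  simp [sqWeight, mul_comm, enorm_eq_nnnorm]

end SquareIntegrability

/-- The standing assumptions of the theorem, for a time scale `T` with a finite left endpoint and
no right endpoint. The measures `μ` and `ν` are `dσ_κ` and `dρ`. -/
structure IsTimeScaleProblem (T : Set ℝ) (μ ν : Measure ℝ) (p r q : ℝ → ℝ) : Prop where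
  isClosed : IsClosed T
  bddBelow : BddBelow T
  not_bddAbove : ¬ BddAbove T
  measure_Ioc : ∀ c d : ℝ, c ≤ d →
    μ (Ioc c d) = ENNReal.ofReal (tsSigma (tsKappa T) d - tsSigma (tsKappa T) c)
  measure_Ico : ∀ c d : ℝ, c ≤ d → ν (Ico c d) = ENNReal.ofReal (tsRho T d - tsRho T c)
  locallyIntegrable_r : LocallyIntegrable r μ
  r_pos : ∀ᵐ t ∂μ, 0 < r t
  locallyIntegrable_q : LocallyIntegrable q μ
  p_ne_zero : ∀ᵐ t ∂ν, p t ≠ 0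
  locallyIntegrable_one_div_p : LocallyIntegrable (fun t => 1 / p t) ν

namespace IsTimeScaleProblem

variable {T : Set ℝ} {μ ν : Measure ℝ} {p r q : ℝ → ℝ}

theorem isClosed_tsKappa (h : IsTimeScaleProblem T μ ν p r q) : IsClosed (tsKappa T) :=
  _root_.isClosed_tsKappa h.isClosed h.bddBelow h.not_bddAbove

theorem not_bddAbove_tsKappa (h : IsTimeScaleProblem T μ ν p r q) : ¬ BddAbove (tsKappa T) :=
  _root_.not_bddAbove_tsKappa h.bddBelow h.not_bddAbove

theorem measurable_tsCeil (h : IsTimeScaleProblem T μ ν p r q) : Measurable (tsCeil (tsKappa T)) :=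
  (monotone_tsCeil h.isClosed_tsKappa h.not_bddAbove_tsKappa).measurable

theorem map_tsCeil (h : IsTimeScaleProblem T μ ν p r q) :
    (volume.restrict (Ioi (sInf T))).map (tsCeil (tsKappa T)) = ν :=
  map_tsCeil_restrict_Ioi h.isClosed h.bddBelow h.not_bddAbove h.measure_Ico

theorem integrableOn_one_div (h : IsTimeScaleProblem T μ ν p r q) (x : ℝ) :
    IntegrableOn (fun t => 1 / p (tsCeil (tsKappa T) t)) (Ioc (tsSigma T (sInf T)) x) := by
  have hint : IntegrableOn (fun t => 1 / p t) (Icc (sInf T) (tsCeil (tsKappa T) x)) ν :=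
    h.locallyIntegrable_one_div_p.integrableOn_isCompact isCompact_Icc
  rw [← h.map_tsCeil, IntegrableOn, Measure.restrict_map h.measurable_tsCeil measurableSet_Icc]
    at hint
  have hcomp := hint.comp_measurable h.measurable_tsCeil
  rw [Measure.restrict_restrict (h.measurable_tsCeil measurableSet_Icc)] at hcomp
  refine IntegrableOn.mono_set hcomp fun t ht => ?_
  have hat : sInf T < t := (le_tsSigma h.not_bddAbove _).trans_lt ht.1
  exact ⟨⟨hat.le.trans (le_tsCeil h.isClosed_tsKappa h.not_bddAbove_tsKappa t),
    monotone_tsCeil h.isClosed_tsKappa h.not_bddAbove_tsKappa ht.2⟩, hat⟩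

/-- The half-line problem on `[σ(a), ∞)` whose solutions are those on the time scale. -/
noncomputable def toHalfLineProblem (h : IsTimeScaleProblem T μ ν p r q) : HalfLineProblem where
  a := tsSigma T (sInf T)
  μ := μ
  isLocallyFiniteMeasure := isLocallyFiniteMeasure_of_measure_Ioc h.measure_Ioc
  w t := 1 / p (tsCeil (tsKappa T) t)
  r := r
  q := q
  integrableOn_w := h.integrableOn_one_div
  locallyIntegrable_r := h.locallyIntegrable_r
  locallyIntegrable_q := h.locallyIntegrable_q
  r_nonneg := h.r_pos.mono fun _ => le_of_lt

theorem isDefinite (h : IsTimeScaleProblem T μ ν p r q) : h.toHalfLineProblem.IsDefinite := by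
  refine HalfLineProblem.isDefinite_of_subset_support h.isClosed_tsKappa h.not_bddAbove_tsKappa
    (subset_support_of_measure_Ioc h.not_bddAbove_tsKappa h.measure_Ioc) h.r_pos
    (fun s t hst => ?_) ?_
  · simp only [toHalfLineProblem, hst]
  · have hp : ∀ᵐ t ∂volume.restrict (Ioi (sInf T)), p (tsCeil (tsKappa T) t) ≠ 0 :=
      ae_of_ae_map h.measurable_tsCeil.aemeasurable (h.map_tsCeil.symm ▸ h.p_ne_zero)
    filter_upwards [ae_restrict_of_ae_restrict_of_subset
      (Ioi_subset_Ioi (le_tsSigma h.not_bddAbove _)) hp] with t ht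
    exact one_div_ne_zero ht

theorem exists_isSol (h : IsTimeScaleProblem T μ ν p r q) {z : ℂ} {u u₁ : ℝ → ℂ}
    (hu : IsSLSol T μ (cR p) (cR r) (cR q) z 0 u u₁) :
    ∃ hc : Continuous u, h.toHalfLineProblem.IsSol z ⟨u, hc⟩ u₁ := by
  refine HalfLineProblem.isSol_of_forall_eq_add fun c x hcx => ?_
  obtain ⟨hu, hu₁⟩ := hu c x hcx
  constructor
  · simpa [toHalfLineProblem, extK_cR, div_eq_mul_inv] using hu
  · simpa [toHalfLineProblem, cR] using hu₁

theorem memLp_weight_iff (h : IsTimeScaleProblem T μ ν p r q) {u : ℝ → ℂ} (hu : Continuous u) :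
    MemLp u 2 h.toHalfLineProblem.weight ↔ L2NearRight T μ r u := by
  have hκ := tsKappa_eq_inter_Ici h.bddBelow h.not_bddAbove
  have hae : ∀ᵐ t ∂μ, t ∈ tsKappa T := mem_of_superset Measure.support_mem_ae
    (support_subset_of_measure_Ioc h.isClosed_tsKappa h.not_bddAbove_tsKappa h.measure_Ioc)
  rw [HalfLineProblem.memLp_weight_iff _ hu]
  constructor
  · intro hL2 c _
    refine (lintegral_mono_set fun t ht => ?_).trans_lt ((lintegral_union_le _
      (Icc (tsSigma T (sInf T)) (tsSigma T (sInf T))) (Ioi (tsSigma T (sInf T)))).trans_lt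
      (ENNReal.add_lt_top.2 ⟨setLIntegral_sqWeight_lt_top h.locallyIntegrable_r hu _ _, hL2⟩))
    rw [Icc_union_Ioi_eq_Ici le_rfl]
    exact (hκ ▸ ht.2).2
  · intro hL2
    have ha : tsSigma T (sInf T) ∈ tsKappa T :=
      hκ ▸ ⟨tsSigma_mem h.isClosed h.not_bddAbove _, self_mem_Ici⟩
    refine (lintegral_mono' ?_ le_rfl).trans_lt (hL2 _ ha)
    refine Measure.restrict_mono_ae (hae.mono fun t ht hat => ⟨⟨le_of_lt hat, ?_⟩, ht⟩)
    exact not_bddAbove_iff.1 h.not_bddAbove t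

theorem isLimitPoint (h : IsTimeScaleProblem T μ ν p r q) (hlp : LimitPointRight T μ p r q) :
    h.toHalfLineProblem.IsLimitPoint := by
  intro z
  obtain ⟨u, u₁, hu, hL2⟩ := hlp z
  obtain ⟨hc, hsol⟩ := h.exists_isSol hu
  exact ⟨_, u₁, hsol, fun hmem => hL2 ((h.memLp_weight_iff hc).1 hmem)⟩

end IsTimeScaleProblem

/-- Weyl–Titchmarsh `m`-function: if `𝕋` is bounded from below and `ℓ` is in the limit-point
case at `b`, then for every `z ∈ ℂ \ ℝ` there is a unique `m(z) ∈ ℂ` such that the Weyl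
solution `ψ_z = θ_z + m(z) φ_z` lies in `L²` near `b`, and `m` is a Herglotz–Nevanlinna
function: analytic on `ℂ \ ℝ`, with `m(z̄) = m(z)̄` and `Im m(z) > 0` for `Im z > 0`. -/
theorem weyl_titchmarsh_m_function_herglotz
    (T : Set ℝ) (hne : T.Nonempty) (hcl : IsClosed T) (hbb : BddBelow T)
    (hfive : ∃ s : Finset ℝ, ↑s ⊆ T ∧ 5 ≤ s.card)
    (μ ν : Measure ℝ)
    (hμ : ∀ c d : ℝ, c ≤ d →
      μ (Set.Ioc c d) = ENNReal.ofReal (tsSigma (tsKappa T) d - tsSigma (tsKappa T) c))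
    (hν : ∀ c d : ℝ, c ≤ d → ν (Set.Ico c d) = ENNReal.ofReal (tsRho T d - tsRho T c))
    (p r q : ℝ → ℝ)
    (hr : LocallyIntegrable r μ) (hrpos : ∀ᵐ t ∂μ, 0 < r t)
    (hq : LocallyIntegrable q μ)
    (hpne : ∀ᵐ t ∂ν, p t ≠ 0) (hp : LocallyIntegrable (fun t => 1 / p t) ν)
    (hlpb : LimitPointRight T μ p r q)
    (φα : ℝ) (hφα : 0 ≤ φα ∧ φα < Real.pi)
    (θ θ1 φ φ1 : ℂ → ℝ → ℂ)
    (hθ : ∀ z : ℂ, IsSLSol T μ (cR p) (cR r) (cR q) z 0 (θ z) (θ1 z) ∧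
      θ z (tsSigma T (sInf T)) = (Real.cos φα : ℂ) ∧
      θ1 z (tsSigma T (sInf T)) = -(Real.sin φα : ℂ))
    (hφ : ∀ z : ℂ, IsSLSol T μ (cR p) (cR r) (cR q) z 0 (φ z) (φ1 z) ∧
      φ z (tsSigma T (sInf T)) = (Real.sin φα : ℂ) ∧
      φ1 z (tsSigma T (sInf T)) = (Real.cos φα : ℂ)) :
    ∃ m : ℂ → ℂ,
      (∀ z : ℂ, z.im ≠ 0 →
        (L2NearRight T μ r (fun x => θ z x + m z * φ z x) ∧
          ∀ m' : ℂ, L2NearRight T μ r (fun x => θ z x + m' * φ z x) → m' = m z)) ∧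
      AnalyticOnNhd ℂ m {z : ℂ | z.im ≠ 0} ∧
      (∀ z : ℂ, z.im ≠ 0 → m (starRingEnd ℂ z) = starRingEnd ℂ (m z)) ∧
      (∀ z : ℂ, 0 < z.im → 0 < (m z).im) := by
  have hub : ¬ BddAbove T := not_bddAbove_of_limitPointRight hr hlpb
  have h : IsTimeScaleProblem T μ ν p r q :=
    ⟨hcl, hbb, hub, hμ, hν, hr, hrpos, hq, hpne, hp⟩
  choose hθc hθs using fun z => h.exists_isSol (hθ z).1
  choose hφc hφs using fun z => h.exists_isSol (hφ z).1
  have hfund (z : ℂ) : h.toHalfLineProblem.IsFundamentalSystem φα z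
      ⟨θ z, hθc z⟩ (θ1 z) ⟨φ z, hφc z⟩ (φ1 z) :=
    ⟨hθs z, hφs z, (hθ z).2.1, (hθ z).2.2, (hφ z).2.1, (hφ z).2.2⟩
  obtain ⟨m, hm, hmem⟩ := HalfLineProblem.exists_isHerglotzNevanlinna_forall_memLp_iff
    h.isDefinite (h.isLimitPoint hlpb) hfund
  have hL2 (z m' : ℂ) (hz : z.im ≠ 0) :
      L2NearRight T μ r (fun x => θ z x + m' * φ z x) ↔ m' = m z :=
    (h.memLp_weight_iff ((hθc z).add (continuous_const.mul (hφc z)))).symm.trans (hmem z hz m')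
  exact ⟨m, fun z hz => ⟨(hL2 z _ hz).2 rfl, fun m' => (hL2 z m' hz).1⟩,
    hm.analyticOnNhd, hm.map_conj, hm.im_pos⟩
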